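/- arXiv:2112.13599 — 5 statements merged into one kernel-verified Lean document; each statement's English description precedes it below -/
import Mathlib

section
/- Let g ≥ 2 and let a₁, …, a_{g−1} be real numbers with 1 < a₁ < a₂ < ⋯ < a_{g−1}. Set a₋₁ = 0, a₀ = 1, and f(z) = z(z²−1)(z²−a₁²)⋯(z²−a_{g−1}²). For j = 0, 1, …, g−1 let I_j = ∫_{a_{j−1}}^{a_j} dz/√|f(z)|, and let I_g = ∫_{a_{g−1}}^{∞} dz/√|f(z)| (a convergent improper integral). Then ∑_{j=0}^{g} (−1)^{⌊(j+1)/2⌋} I_j = 0. -/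
/-!
The relation is Cauchy's theorem on the upper half plane, read off on its boundary.

Let `S` be the set of the `2g + 1` roots of `f`, and for `Im z ≥ 0` let
`H z = ∏ r ∈ S, (-i (z - r))^(-1/2)` with the principal branch (`invSqrtProd`). Rotating by `-i`
sends the upper half plane to the right half plane, so `H` is holomorphic for `Im z > 0` and
continuous up to the real line away from `S`. Since `H` decays at least like `|z|^(-3/2)`, its
integral over every line `Im z = ε > 0` vanishes (`integral_invSqrtProd_shift`), by Cauchy's theorem
on large rectangles. As `|H (x + iε)| ≤ |H x|` and `H` is integrable on the real line
(`integrable_invSqrtProd`), dominated convergence gives `∫ H = 0` over `ℝ`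
(`integral_invSqrtProd`).

The roots are symmetric about `0`, so `H (-x)` is the conjugate of `H x`; hence the integral of
`Re H` over `(0, ∞)` vanishes (`setIntegral_re_invSqrtProd_roots`). For real `x`, a root on the left
of `x` contributes the phase `e^{iπ/4}` and a root on the right `e^{-iπ/4}`. On `(a_{j-1}, a_j)` there
are `g + 1 + j` roots on the left and `g - j` on the right, so
`H = e^{iπ/4} i^j / √|f|` and `Re H = (√2 / 2) (-1)^⌊(j+1)/2⌋ / √|f|`
(`re_invSqrtProd_roots`). Summing over the intervals gives the claim.
-/

open MeasureTheory intervalIntegral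

open Complex Filter Topology Set Asymptotics

/-! ### The branch of the inverse square root and its bounds -/

/-- The branch `(-i (z - r))^(-1/2)` of `1 / √(z - r)` up to a constant phase. Its cut is the
vertical half-line going down from `r`, so it is holomorphic near every `z ≠ r` with `Im z ≥ 0`.
At `z = r` it takes the junk value `0`, which agrees with `1 / √0 = 0`. -/
noncomputable def invSqrt (r : ℝ) (z : ℂ) : ℂ := (-I * (z - r)) ^ ((-1 / 2 : ℝ) : ℂ)

/-- A branch of `∏ r ∈ S, 1 / √(z - r)` on the closed upper half plane, up to a constant phase. -/
noncomputable def invSqrtProd (S : Finset ℝ) (z : ℂ) : ℂ := ∏ r ∈ S, invSqrt r z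

lemma norm_invSqrt (r : ℝ) (z : ℂ) : ‖invSqrt r z‖ = ‖z - r‖ ^ (-1 / 2 : ℝ) := by
  rw [invSqrt, norm_cpow_real, norm_mul, norm_neg, norm_I, one_mul]

lemma differentiableAt_invSqrt {r : ℝ} {z : ℂ} (hz : 0 ≤ z.im) (hzr : z ≠ r) :
    DifferentiableAt ℂ (invSqrt r) z := by
  unfold invSqrt
  refine DifferentiableAt.cpow_const (by fun_prop) ?_
  rw [mem_slitPlane_iff]
  by_contra! h
  simp only [mul_re, neg_re, I_re, sub_re, ofReal_re, neg_im, I_im, sub_im, ofReal_im, mul_im] at h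
  apply hzr
  apply Complex.ext <;> simp <;> linarith [h.1, h.2]

lemma differentiableAt_invSqrtProd {S : Finset ℝ} {z : ℂ} (hz : 0 ≤ z.im)
    (hzS : ∀ r ∈ S, z ≠ r) : DifferentiableAt ℂ (invSqrtProd S) z := by
  unfold invSqrtProd
  exact DifferentiableAt.fun_finsetProd fun r hr => differentiableAt_invSqrt hz (hzS r hr)

lemma differentiableAt_invSqrtProd_of_im_pos (S : Finset ℝ) {z : ℂ} (hz : 0 < z.im) :
    DifferentiableAt ℂ (invSqrtProd S) z :=
  differentiableAt_invSqrtProd hz.le fun r _ h => by simp [h] at hz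

lemma measurable_invSqrtProd (S : Finset ℝ) :
    Measurable fun x : ℝ => invSqrtProd S x := by
  unfold invSqrtProd invSqrt
  fun_prop

lemma norm_invSqrtProd_le {S : Finset ℝ} (hS : 3 ≤ S.card) {z : ℂ} {ρ : ℝ} (hρ : 1 ≤ ρ)
    (h : ∀ r ∈ S, ρ ≤ ‖z - r‖) : ‖invSqrtProd S z‖ ≤ ρ ^ (-3 / 2 : ℝ) := by
  rw [invSqrtProd, norm_prod]
  calc ∏ r ∈ S, ‖invSqrt r z‖ ≤ ∏ r ∈ S, ρ ^ (-1 / 2 : ℝ) := by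
        refine Finset.prod_le_prod (fun _ _ => norm_nonneg _) fun r hr => ?_
        rw [norm_invSqrt]
        exact Real.rpow_le_rpow_of_nonpos (by linarith) (h r hr) (by norm_num)
    _ = (ρ ^ (-1 / 2 : ℝ)) ^ S.card := by simp
    _ ≤ (ρ ^ (-1 / 2 : ℝ)) ^ 3 :=
        pow_le_pow_of_le_one (by positivity)
          (Real.rpow_le_one_of_one_le_of_nonpos hρ (by norm_num)) hS
    _ = ρ ^ (-3 / 2 : ℝ) := by
        rw [← Real.rpow_natCast, ← Real.rpow_mul (by linarith)]; norm_num

/-- The decay of `invSqrtProd S` at infinity, on which both its integrability and the vanishing of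
the contributions of the far sides of a large rectangle rest. -/
lemma norm_invSqrtProd_le_of_abs {S : Finset ℝ} (hS : 3 ≤ S.card) {M : ℝ}
    (hM : ∀ r ∈ S, |r| ≤ M) {z : ℂ} {R : ℝ} (h1 : 2 ≤ R) (h2 : 2 * M ≤ R) (hz : R ≤ ‖z‖) :
    ‖invSqrtProd S z‖ ≤ (R / 2) ^ (-3 / 2 : ℝ) := by
  refine norm_invSqrtProd_le hS (by linarith) fun r hr => ?_
  have := norm_sub_norm_le z r
  rw [norm_real, Real.norm_eq_abs] at this
  linarith [hM r hr]

lemma exists_bound (S : Finset ℝ) : ∃ M, ∀ r ∈ S, |r| ≤ M := by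
  refine ⟨∑ r ∈ S, |r|, fun r hr => ?_⟩
  exact Finset.single_le_sum (f := fun r => |r|) (fun _ _ => abs_nonneg _) hr

/-! ### Integrability on the real line -/

lemma integrableAtFilter_invSqrt (r : ℝ) :
    IntegrableAtFilter (fun x : ℝ => invSqrt r x) (𝓝 r) := by
  have h := (intervalIntegrable_cpow' (a := -1) (b := 1) (r := ((-1 / 2 : ℝ) : ℂ))
    (by norm_num)).comp_sub_right r
  rw [intervalIntegrable_iff_integrableOn_Ioo_of_le (by linarith)] at h
  refine ⟨Ioo (-1 + r) (1 + r), Ioo_mem_nhds (by linarith) (by linarith), ?_⟩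
  have hm : Measurable fun x : ℝ => invSqrt r x := by unfold invSqrt; fun_prop
  refine Integrable.mono h hm.aestronglyMeasurable (Eventually.of_forall fun x => ?_)
  rw [norm_invSqrt, norm_cpow_real]
  push_cast
  rfl

/-- Near a point of `S` one factor is the integrable singularity `|x - r|^(-1/2)` and the product of
the others is bounded. -/
lemma locallyIntegrable_invSqrtProd (S : Finset ℝ) :
    LocallyIntegrable fun x : ℝ => invSqrtProd S x := by
  intro x
  have key : ∀ T : Finset ℝ, x ∉ T →
      (fun y : ℝ => invSqrtProd T y) =O[𝓝 x] (fun _ => (1 : ℝ)) := fun T hT => by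
    have : ContinuousAt (fun y : ℝ => invSqrtProd T y) x :=
      ContinuousAt.comp (f := fun y : ℝ => (y : ℂ)) (g := invSqrtProd T)
        (differentiableAt_invSqrtProd (by simp) fun r hr h => by
          rw [ofReal_inj] at h; exact hT (h ▸ hr)).continuousAt (by fun_prop)
    exact this.isBigO_one ℝ
  have hm := (measurable_invSqrtProd S).aestronglyMeasurable (μ := volume)
    |>.stronglyMeasurableAtFilter (l := 𝓝 x)
  by_cases hx : x ∈ S
  · refine IsBigO.integrableAtFilter ?_ hm (integrableAtFilter_invSqrt x).norm
    have h3 := (isBigO_refl (fun y : ℝ => ‖invSqrt x y‖) (𝓝 x)).mul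
      (key (S.erase x) (Finset.notMem_erase x S)).norm_left
    refine (h3.congr' (Eventually.of_forall fun y => ?_)
      (Eventually.of_forall fun y => mul_one _)).of_norm_left
    beta_reduce
    rw [← norm_mul, invSqrtProd, invSqrtProd, Finset.mul_prod_erase S (fun r => invSqrt r y) hx]
  · exact (key S hx).integrableAtFilter hm
      ((locallyIntegrable_const (1 : ℝ)) x)

lemma integrable_invSqrtProd {S : Finset ℝ} (hS : 3 ≤ S.card) :
    Integrable fun x : ℝ => invSqrtProd S x := by
  obtain ⟨M, hM⟩ := exists_bound S
  refine (locallyIntegrable_invSqrtProd S).integrable_of_isBigO_cocompact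
    (g := fun x : ℝ => (1 + ‖x‖) ^ (-(3 / 2) : ℝ)) ?_
    ((integrable_one_add_norm (by norm_num)).integrableAtFilter _)
  refine IsBigO.of_bound ((1 / 4) ^ (-(3 / 2) : ℝ)) ?_
  have htop := tendsto_norm_cocompact_atTop (E := ℝ)
  filter_upwards [htop.eventually_ge_atTop 2, htop.eventually_ge_atTop (2 * M)] with x h1 h2
  refine (norm_invSqrtProd_le_of_abs hS hM (z := x) h1 h2 (by simp)).trans ?_
  have h0 : 0 ≤ (1 + ‖x‖) ^ (-(3 / 2) : ℝ) := by positivity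
  rw [Real.norm_of_nonneg h0, ← Real.mul_rpow (by norm_num) (by positivity), neg_div]
  exact Real.rpow_le_rpow_of_nonpos (by positivity) (by linarith) (by norm_num)

/-! ### Vanishing of the integral over the real line -/

lemma ae_notMem (S : Finset ℝ) : ∀ᵐ x : ℝ, x ∉ S := by
  have := S.countable_toSet.ae_notMem (volume : Measure ℝ)
  simpa using this

/-- Domination of the shifted integrand; for `ε ≠ 0` it fails on `S`, where the
right-hand side is the junk value `0`. -/
lemma norm_invSqrtProd_shift_le {S : Finset ℝ} {x : ℝ} (hx : x ∉ S) (ε : ℝ) :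
    ‖invSqrtProd S (x + ε * I)‖ ≤ ‖invSqrtProd S x‖ := by
  rw [invSqrtProd, invSqrtProd, norm_prod, norm_prod]
  refine Finset.prod_le_prod (fun _ _ => norm_nonneg _) fun r hr => ?_
  rw [norm_invSqrt, norm_invSqrt]
  have hne : x - r ≠ 0 := fun h => hx (by rw [sub_eq_zero.1 h]; exact hr)
  refine Real.rpow_le_rpow_of_nonpos ?_ ?_ (by norm_num)
  · rw [norm_pos_iff]; exact_mod_cast hne
  · have h := abs_re_le_norm ((x : ℂ) + ε * I - r)
    rw [← ofReal_sub, norm_real, Real.norm_eq_abs]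
    simpa using h

lemma continuous_invSqrtProd_shift (S : Finset ℝ) {ε : ℝ} (hε : 0 < ε) :
    Continuous fun x : ℝ => invSqrtProd S (x + ε * I) := by
  rw [continuous_iff_continuousAt]
  intro x
  exact ContinuousAt.comp (f := fun x : ℝ => (x : ℂ) + ε * I) (g := invSqrtProd S)
    (differentiableAt_invSqrtProd_of_im_pos S (by simpa)).continuousAt (by fun_prop)

/-- Cauchy's theorem on the rectangle with opposite corners `-R + iε` and `R + i(ε + R)`: the three
sides other than the bottom one contribute `O(R · R^(-3/2))`. -/
lemma integral_invSqrtProd_shift {S : Finset ℝ} (hS : 3 ≤ S.card) {ε : ℝ} (hε : 0 < ε) :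
    ∫ x : ℝ, invSqrtProd S (x + ε * I) = 0 := by
  have hint : Integrable fun x : ℝ => invSqrtProd S (x + ε * I) :=
    (integrable_invSqrtProd hS).mono (continuous_invSqrtProd_shift S hε).aestronglyMeasurable
      ((ae_notMem S).mono fun x hx => norm_invSqrtProd_shift_le hx ε)
  refine tendsto_nhds_unique
    (intervalIntegral_tendsto_integral hint tendsto_neg_atTop_atBot tendsto_id) ?_
  obtain ⟨M, hM⟩ := exists_bound S
  have hlim : Tendsto (fun R : ℝ => 8 * (R / 2) ^ (-(1 / 2) : ℝ)) atTop (𝓝 0) := by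
    have h1 : Tendsto (fun R : ℝ => R / 2) atTop atTop :=
      tendsto_id.atTop_div_const (by norm_num)
    simpa using ((tendsto_rpow_neg_atTop (show (0 : ℝ) < 1 / 2 by norm_num)).comp h1).const_mul 8
  refine squeeze_zero_norm' ?_ hlim
  filter_upwards [eventually_ge_atTop (2 : ℝ), eventually_ge_atTop (2 * M)] with R h1 h2
  have hrect := integral_boundary_rect_eq_zero_of_differentiableOn (invSqrtProd S)
    ((-R : ℝ) + ε * I) (R + (ε + R : ℝ) * I) (by
      intro z hz
      refine (differentiableAt_invSqrtProd_of_im_pos S ?_).differentiableWithinAt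
      have := hz.2
      simp only [mem_preimage] at this
      rw [mem_uIcc] at this
      simp at this
      rcases this with h | h <;> linarith [h.1, h.2])
  simp only [add_re, add_im, ofReal_re, ofReal_im, mul_re, mul_im, I_re, I_im, mul_zero, mul_one,
    sub_zero, add_zero, zero_add] at hrect
  have hR0 : 0 ≤ R := by linarith
  have hb : ∀ z : ℂ, R ≤ ‖z‖ → ‖invSqrtProd S z‖ ≤ (R / 2) ^ (-3 / 2 : ℝ) := fun z hz =>
    norm_invSqrtProd_le_of_abs hS hM h1 h2 hz
  have htop := norm_integral_le_of_norm_le_const (a := -R) (b := R)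
    (f := fun x : ℝ => invSqrtProd S (x + (ε + R : ℝ) * I)) fun x _ => hb _ (by
      have := abs_im_le_norm ((x : ℂ) + (ε + R : ℝ) * I)
      simp only [add_im, ofReal_im, mul_im, ofReal_re, I_im, I_re, mul_one, mul_zero, add_zero,
        zero_add] at this
      linarith [le_abs_self (ε + R)])
  have hright := norm_integral_le_of_norm_le_const (a := ε) (b := ε + R)
    (f := fun y : ℝ => invSqrtProd S ((R : ℝ) + y * I)) fun y _ => hb _ (by
      have := abs_re_le_norm ((R : ℂ) + y * I)
      simp at this
      linarith [le_abs_self R])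
  have hleft := norm_integral_le_of_norm_le_const (a := ε) (b := ε + R)
    (f := fun y : ℝ => invSqrtProd S ((-R : ℝ) + y * I)) fun y _ => hb _ (by
      have := abs_re_le_norm (((-R : ℝ) : ℂ) + y * I)
      simp at this
      simp
      linarith [le_abs_self R])
  rw [show R - -R = 2 * R by ring, abs_of_nonneg (by linarith)] at htop
  rw [add_sub_cancel_left, abs_of_nonneg hR0] at hright hleft
  have hpow : 8 * (R / 2) ^ (-(1 / 2) : ℝ) = 4 * ((R / 2) ^ (-3 / 2 : ℝ) * R) := by
    have : (R / 2) ^ (-(1 / 2) : ℝ) = (R / 2) ^ (-3 / 2 : ℝ) * (R / 2) := by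
      rw [← Real.rpow_add_one (by linarith)]; norm_num
    rw [this]; ring
  set A := ∫ x in (-R)..R, invSqrtProd S (x + ε * I)
  set B := ∫ x in (-R)..R, invSqrtProd S (x + (ε + R : ℝ) * I)
  set C := ∫ y in ε..(ε + R), invSqrtProd S ((R : ℝ) + y * I)
  set D := ∫ y in ε..(ε + R), invSqrtProd S ((-R : ℝ) + y * I)
  have hA : A = B - I * C + I * D := by
    simp only [smul_eq_mul] at hrect
    linear_combination hrect
  change ‖A‖ ≤ _
  rw [hA, hpow]
  have e1 := norm_add_le (B - I * C) (I * D)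
  have e2 := norm_sub_le B (I * C)
  rw [norm_mul, norm_I, one_mul] at e1 e2
  linarith

/-- The limit `ε → 0` of `integral_invSqrtProd_shift`, by dominated convergence. -/
lemma integral_invSqrtProd {S : Finset ℝ} (hS : 3 ≤ S.card) :
    ∫ x : ℝ, invSqrtProd S x = 0 := by
  have h : Tendsto (fun ε : ℝ => ∫ x : ℝ, invSqrtProd S (x + ε * I)) (𝓝[>] 0)
      (𝓝 (∫ x : ℝ, invSqrtProd S x)) := by
    refine tendsto_integral_filter_of_dominated_convergence (fun x => ‖invSqrtProd S x‖) ?_ ?_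
      (integrable_invSqrtProd hS).norm ?_
    · filter_upwards [self_mem_nhdsWithin] with ε hε
      exact (continuous_invSqrtProd_shift S hε).aestronglyMeasurable
    · exact Eventually.of_forall fun ε => (ae_notMem S).mono fun x hx =>
        norm_invSqrtProd_shift_le hx ε
    · filter_upwards [ae_notMem S] with x hx
      have hc : ContinuousAt (invSqrtProd S) (x : ℂ) :=
        (differentiableAt_invSqrtProd (by simp) fun r hr h => by
          rw [ofReal_inj] at h; exact hx (h ▸ hr)).continuousAt
      refine hc.tendsto.comp (tendsto_nhdsWithin_of_tendsto_nhds ?_)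
      have : Continuous fun ε : ℝ => (x : ℂ) + ε * I := by fun_prop
      simpa using this.tendsto 0
  refine tendsto_nhds_unique h (tendsto_const_nhds.congr' ?_)
  filter_upwards [self_mem_nhdsWithin] with ε hε
  exact (integral_invSqrtProd_shift hS hε).symm

/-! ### Boundary values -/

lemma invSqrt_neg (r x : ℝ) :
    invSqrt r (-x : ℝ) = (starRingEnd ℂ) (invSqrt (-r) x) := by
  unfold invSqrt
  rw [← conj_ofReal (-1 / 2), ← conj_cpow, conj_ofReal]
  · congr 1
    simp
    ring
  · rw [Ne, arg_eq_pi_iff]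
    simp

/-- Values on the real line: the phase is `e^{iπ/4} = (√2 / 2) (1 + i)` to the right of `r` and its
conjugate to the left. At `x = r` both sides are `0`. -/
lemma invSqrt_ofReal (r x : ℝ) :
    invSqrt r x = ((√|x - r|)⁻¹ : ℝ) * (√2 / 2 * (1 + (if r < x then I else -I))) := by
  have hpow : ∀ y : ℝ, 0 ≤ y → y ^ (-1 / 2 : ℝ) = (√y)⁻¹ := fun y hy => by
    rw [Real.sqrt_eq_rpow, neg_div, Real.rpow_neg hy]
  have hnorm : ‖-I * ((x : ℂ) - r)‖ = |x - r| := by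
    rw [norm_mul, norm_neg, norm_I, one_mul, ← ofReal_sub, norm_real, Real.norm_eq_abs]
  unfold invSqrt
  rw [cpow_ofReal, hnorm, hpow _ (abs_nonneg _)]
  rcases lt_trichotomy r x with h | rfl | h
  · have : arg (-I * ((x : ℂ) - r)) = -(Real.pi / 2) := by
      rw [mul_comm, ← ofReal_sub, arg_real_mul _ (sub_pos.2 h), arg_neg_I]
    rw [this, if_pos h, show -(Real.pi / 2) * (-1 / 2) = Real.pi / 4 by ring,
      Real.cos_pi_div_four, Real.sin_pi_div_four]
    push_cast
    ring
  · simp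
  · have : arg (-I * ((x : ℂ) - r)) = Real.pi / 2 := by
      rw [show -I * ((x : ℂ) - r) = ((r - x : ℝ) : ℂ) * I by push_cast; ring,
        arg_real_mul _ (sub_pos.2 h), arg_I]
    rw [this, if_neg h.not_gt, show Real.pi / 2 * (-1 / 2) = -(Real.pi / 4) by ring,
      Real.cos_neg, Real.sin_neg, Real.cos_pi_div_four, Real.sin_pi_div_four]
    push_cast
    ring

lemma ofReal_sqrt_two_mul_self : (√2 : ℂ) * √2 = 2 := by
  rw [← ofReal_mul, Real.mul_self_sqrt (by norm_num)]; norm_num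

/-- The phases of a pair of opposite roots cancel for `x < b` and multiply to `i` for `b < x`. -/
lemma invSqrt_mul_invSqrt_neg {b x : ℝ} (hb : 0 < b) (hx : 0 < x) :
    invSqrt b x * invSqrt (-b) x =
      ((√|x ^ 2 - b ^ 2|)⁻¹ : ℝ) * (if b < x then I else 1) := by
  rw [invSqrt_ofReal, invSqrt_ofReal, if_pos (show -b < x by linarith),
    show x ^ 2 - b ^ 2 = (x - b) * (x - -b) by ring, abs_mul, Real.sqrt_mul (abs_nonneg _), mul_inv,
    ofReal_mul]
  have h2 := ofReal_sqrt_two_mul_self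
  split_ifs
  · linear_combination (((√|x - b|)⁻¹ : ℝ) : ℂ) * (((√|x - -b|)⁻¹ : ℝ) : ℂ) *
      ((1 + I) ^ 2 / 4 * h2 + I_sq / 2)
  · linear_combination (((√|x - b|)⁻¹ : ℝ) : ℂ) * (((√|x - -b|)⁻¹ : ℝ) : ℂ) *
      ((1 - I ^ 2) / 4 * h2 - I_sq / 2)

/-! ### The symmetric set of roots -/

/-- The roots `0, ±a 0, …, ±a (g - 1)` of `t ∏ (t² - a i²)`. -/
noncomputable def roots (g : ℕ) (a : ℕ → ℝ) : Finset ℝ :=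
  insert 0 ((Finset.range g).image a ∪ (Finset.range g).image fun i => -a i)

section
variable {g : ℕ} {a : ℕ → ℝ}

lemma prod_roots (hpos : ∀ i < g, 0 < a i) (hmono : StrictMonoOn a (Iio g)) (φ : ℝ → ℂ) :
    ∏ r ∈ roots g a, φ r = φ 0 * ∏ i ∈ Finset.range g, (φ (a i) * φ (-a i)) := by
  have hinj : ∀ i ∈ Finset.range g, ∀ j ∈ Finset.range g, a i = a j → i = j := fun i hi j hj h =>
    hmono.injOn (by simpa using hi) (by simpa using hj) h
  unfold roots
  rw [Finset.prod_insert, Finset.prod_union, Finset.prod_image hinj, Finset.prod_image,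
    Finset.prod_mul_distrib]
  · exact fun i hi j hj h => hinj i hi j hj (neg_injective h)
  · rw [Finset.disjoint_left]
    intro r h1 h2
    simp only [Finset.mem_image, Finset.mem_range] at h1 h2
    obtain ⟨i, hi, rfl⟩ := h1
    obtain ⟨j, hj, h⟩ := h2
    linarith [hpos i hi, hpos j hj]
  · simp only [Finset.mem_union, Finset.mem_image, Finset.mem_range, not_or, not_exists, not_and]
    exact ⟨fun i hi h => (hpos i hi).ne' h, fun i hi h => by linarith [hpos i hi]⟩

lemma three_le_card_roots (hg : 2 ≤ g) (hpos : ∀ i < g, 0 < a i) : 3 ≤ (roots g a).card := by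
  have h0 := hpos 0 (by omega)
  have hsub : ({0, a 0, -a 0} : Finset ℝ) ⊆ roots g a := by
    have : 0 < g := by omega
    intro r hr
    simp only [Finset.mem_insert, Finset.mem_singleton] at hr
    simp only [roots, Finset.mem_insert, Finset.mem_union, Finset.mem_image, Finset.mem_range]
    rcases hr with rfl | rfl | rfl
    · exact Or.inl rfl
    · exact Or.inr (Or.inl ⟨0, this, rfl⟩)
    · exact Or.inr (Or.inr ⟨0, this, rfl⟩)
  refine le_of_eq_of_le (Finset.card_eq_three.2 ⟨0, a 0, -a 0, ?_, ?_, ?_, rfl⟩).symm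
    (Finset.card_le_card hsub) <;> intro h <;> linarith

lemma re_invSqrtProd_neg (hpos : ∀ i < g, 0 < a i) (hmono : StrictMonoOn a (Iio g)) (x : ℝ) :
    (invSqrtProd (roots g a) (-x : ℝ)).re = (invSqrtProd (roots g a) x).re := by
  rw [← conj_re (invSqrtProd (roots g a) x)]
  congr 1
  unfold invSqrtProd
  rw [prod_roots hpos hmono, prod_roots hpos hmono]
  simp only [invSqrt_neg, map_mul, map_prod, neg_neg, neg_zero]
  congr 1
  exact Finset.prod_congr rfl fun i _ => mul_comm _ _

lemma invSqrtProd_roots (hpos : ∀ i < g, 0 < a i) (hmono : StrictMonoOn a (Iio g)) {x : ℝ}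
    (hx : 0 < x) :
    invSqrtProd (roots g a) x =
      ((1 / √|x * ∏ i ∈ Finset.range g, (x ^ 2 - a i ^ 2)| : ℝ) : ℂ) *
        (√2 / 2 * (1 + I) * ∏ i ∈ Finset.range g, (if a i < x then I else 1)) := by
  have hsqrt : 1 / √|x * ∏ i ∈ Finset.range g, (x ^ 2 - a i ^ 2)| =
      (√|x|)⁻¹ * ∏ i ∈ Finset.range g, (√|x ^ 2 - a i ^ 2|)⁻¹ := by
    rw [abs_mul, Real.sqrt_mul (abs_nonneg _), one_div, mul_inv, Finset.abs_prod,
      Finset.prod_inv_distrib]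
    congr 2
    induction Finset.range g using Finset.induction_on with
    | empty => simp
    | insert i s hi ih =>
      rw [Finset.prod_insert hi, Finset.prod_insert hi, Real.sqrt_mul (abs_nonneg _), ih]
  unfold invSqrtProd
  rw [prod_roots hpos hmono, Finset.prod_congr rfl fun i hi =>
    invSqrt_mul_invSqrt_neg (hpos i (Finset.mem_range.1 hi)) hx, Finset.prod_mul_distrib, hsqrt,
    invSqrt_ofReal, if_pos hx, sub_zero]
  push_cast
  ring

lemma re_one_add_I_mul_I_pow (j : ℕ) :
    ((1 + I) * I ^ j).re = (-1 : ℝ) ^ ((j + 1) / 2) := by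
  induction j using Nat.twoStepInduction with
  | zero => simp
  | one => simp
  | more n ih _ =>
    rw [show (n + 2 + 1) / 2 = (n + 1) / 2 + 1 by omega, pow_succ (-1 : ℝ), ← ih, pow_add,
      I_sq]
    simp

/-- At a point `x > 0` with exactly the first `j` positive roots strictly to its left, the real part of
`invSqrtProd` is `√2 / 2` times the `j`-th signed integrand of the theorem. -/
lemma re_invSqrtProd_roots (hpos : ∀ i < g, 0 < a i) (hmono : StrictMonoOn a (Iio g)) {x : ℝ}
    (hx : 0 < x) {j : ℕ} (hj : j ≤ g) (hlt : ∀ i < g, (a i < x ↔ i < j)) :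
    (invSqrtProd (roots g a) x).re = √2 / 2 * ((-1 : ℝ) ^ ((j + 1) / 2) *
      (1 / √|x * ∏ i ∈ Finset.range g, (x ^ 2 - a i ^ 2)|)) := by
  have hprod : ∏ i ∈ Finset.range g, (if a i < x then I else 1) = I ^ j := by
    rw [Finset.prod_congr rfl fun i hi => if_congr (hlt i (Finset.mem_range.1 hi)) rfl rfl,
      ← Finset.prod_filter, Finset.prod_const]
    congr 1
    rw [show (Finset.range g).filter (· < j) = Finset.range j by ext; simp; omega,
      Finset.card_range]
  rw [invSqrtProd_roots hpos hmono hx, hprod, re_ofReal_mul, mul_assoc,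
    show (√2 / 2 : ℂ) = ((√2 / 2 : ℝ) : ℂ) by push_cast; rfl, re_ofReal_mul,
    re_one_add_I_mul_I_pow]
  ring

lemma setIntegral_re_invSqrtProd_roots (hg : 2 ≤ g) (hpos : ∀ i < g, 0 < a i)
    (hmono : StrictMonoOn a (Iio g)) :
    ∫ x in Ioi (0 : ℝ), (invSqrtProd (roots g a) x).re = 0 := by
  have hcard := three_le_card_roots hg hpos
  have h : ∫ x : ℝ, (invSqrtProd (roots g a) x).re = 0 := by
    have := integral_re (𝕜 := ℂ) (integrable_invSqrtProd hcard)
    rw [integral_invSqrtProd hcard] at this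
    simpa using this
  have habs : ∀ x : ℝ, (invSqrtProd (roots g a) (|x| : ℝ)).re = (invSqrtProd (roots g a) x).re :=
    fun x => by
      rcases abs_choice x with hx | hx <;> rw [hx]
      exact re_invSqrtProd_neg hpos hmono x
  have h2 := integral_comp_abs (f := fun x : ℝ => (invSqrtProd (roots g a) x).re)
  simp only [habs, h] at h2
  linarith

end

/-- For `g ≥ 2` and `1 = a 0 < a 1 < ⋯ < a (g-1)`, with
`f z = z (z² - a₀²)(z² - a₁²)⋯(z² - a_{g-1}²)` (so `a 0 = 1` gives the factor `z² - 1`),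
the alternating sum `∑_{j=0}^{g} (-1)^⌊(j+1)/2⌋ I_j` of the hyperelliptic integrals
`I_j = ∫_{a_{j-1}}^{a_j} dz/√|f|` (with `a_{-1} = 0`, and `I_g = ∫_{a_{g-1}}^∞ dz/√|f|`)
vanishes. -/
theorem stmt_0 (g : ℕ) (hg : 2 ≤ g) (a : ℕ → ℝ) (ha0 : a 0 = 1)
    (hmono : StrictMonoOn a (Set.Iio g)) :
    (∑ j ∈ Finset.range g,
        (-1 : ℝ) ^ ((j + 1) / 2) *
          ∫ t in (if j = 0 then (0 : ℝ) else a (j - 1))..(a j),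
            1 / Real.sqrt |t * ∏ i ∈ Finset.range g, (t ^ 2 - a i ^ 2)|)
      + (-1 : ℝ) ^ ((g + 1) / 2) *
          ∫ t in Set.Ioi (a (g - 1)),
            1 / Real.sqrt |t * ∏ i ∈ Finset.range g, (t ^ 2 - a i ^ 2)| = 0 := by
  have hg0 : (0 : ℕ) ∈ Iio g := by simp; omega
  have hpos : ∀ i < g, 0 < a i := fun i hi => by
    have := hmono.monotoneOn hg0 hi (Nat.zero_le i)
    linarith
  set N : ℝ → ℝ := fun t => 1 / √|t * ∏ i ∈ Finset.range g, (t ^ 2 - a i ^ 2)| with hN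
  set F : ℝ → ℝ := fun t => (invSqrtProd (roots g a) t).re with hF
  have hFint : Integrable F := (integrable_invSqrtProd (three_le_card_roots hg hpos)).re
  -- `b` lists the endpoints `0, a 0, …, a (g - 1)`, so the `j`-th interval runs from `b j` to `a j`.
  set b : ℕ → ℝ := fun j => if j = 0 then 0 else a (j - 1) with hb
  have hb0 : b 0 = 0 := rfl
  have hbs : ∀ j, b (j + 1) = a j := fun j => rfl
  have hbnn : ∀ j ≤ g, 0 ≤ b j := by
    rintro (_ | j) hj
    · exact le_rfl
    · exact (hpos j hj).le
  have hlow : ∀ j ≤ g, ∀ x, b j < x → ∀ i < g, i < j → a i < x := by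
    rintro (_ | j) hj x hx i hi hij
    · omega
    · exact (hmono.monotoneOn hi (show j < g by omega) (by omega)).trans_lt hx
  have hbulk : ∀ j ∈ Finset.range g,
      ∫ t in b j..b (j + 1), F t = √2 / 2 * ((-1 : ℝ) ^ ((j + 1) / 2) * ∫ t in b j..a j, N t) := by
    intro j hj
    have hj : j < g := Finset.mem_range.1 hj
    have hle : b j ≤ a j := by
      rcases j with _ | j
      · exact (hpos 0 hj).le
      · exact (hmono (show j < g by omega) hj (Nat.lt_succ_self j)).le
    rw [hbs, ← intervalIntegral.integral_const_mul, ← intervalIntegral.integral_const_mul]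
    -- Both integrands vanish at the right endpoint `a j`, so they agree on the half-open interval.
    refine intervalIntegral.integral_congr_ae (Eventually.of_forall fun x hx => ?_)
    rw [uIoc_of_le hle] at hx
    refine re_invSqrtProd_roots hpos hmono ((hbnn j hj.le).trans_lt hx.1) hj.le fun i hi =>
      ⟨fun h => ?_, hlow j hj.le x hx.1 i hi⟩
    exact (hmono.lt_iff_lt hi hj).1 (h.trans_le hx.2)
  have htail : ∫ t in Ioi (b g), F t =
      √2 / 2 * ((-1 : ℝ) ^ ((g + 1) / 2) * ∫ t in Ioi (b g), N t) := by
    rw [← MeasureTheory.integral_const_mul, ← MeasureTheory.integral_const_mul]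
    refine setIntegral_congr_fun measurableSet_Ioi fun x hx => ?_
    exact re_invSqrtProd_roots hpos hmono ((hbnn g le_rfl).trans_lt hx) le_rfl fun i hi =>
      ⟨fun _ => hi, hlow g le_rfl x hx i hi⟩
  have hsplit := integral_interval_add_Ioi (a := b 0) (b := b g) hFint.integrableOn
    hFint.integrableOn
  rw [← sum_integral_adjacent_intervals fun k _ => hFint.intervalIntegrable,
    Finset.sum_congr rfl hbulk, htail, hb0, setIntegral_re_invSqrtProd_roots hg hpos hmono,
    ← Finset.mul_sum, ← mul_add] at hsplit
  have hbg : b g = a (g - 1) := if_neg (by omega)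
  rw [hbg] at hsplit
  exact (mul_eq_zero.1 hsplit).resolve_left (by positivity)
end

section
/- Let a > 1 be a real number and set f(z) = z(z²−1)(z²−a²). Define p = ∫₁^a dz/√|f(z)|, q = ∫₀¹ dz/√|f(z)|, r = −∫₁^a z·dz/√|f(z)|, and s = ∫₀¹ z·dz/√|f(z)|. Then p·r − p·s − q·r = 0, i.e., p·s = (q − p)·(−r). -/
/-!
With `b = √a` and `R = -r`, the claim is `R (q - p) = p s`; it follows from the two relations
`R = b p` and `b q - s = b p`, both obtained by real substitutions.

* The involution `z ↦ a / z` of the curve carries `dz/√|f|` to `z dz/(b √|f|)`. On `[1, a]` this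
  gives `R = b p`; on `[1, b]`, which it carries to `[b, a]`, it gives
  `b p = ∫₁ᵇ (b + z) dz/√|f|`.
* The forms `(b ± z) dz/√|f|` are invariant and anti-invariant, so they descend to the two elliptic
  quotients of the curve. The quotient map `u = z + a / z` turns `∫₁ᵇ (b + z) dz/√|f|` into
  `I = ∫ du/√((u - 2b)(c² - u²))` over `[2b, c]`, where `c = 1 + a`. For the other sign, the
  quotient map is followed by a Möbius map that identifies the two elliptic curves and matches
  their branch points; the composite `u = c - 2c(b-1)² z/((z+1)(z+a))` turns
  `∫₀¹ (b - z) dz/√|f|` into the same integral `I`, so that `b q - s = I = b p`.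

All the substitutions are decreasing (`integral_subst_anti`); integrability, needed only for
additivity, comes from that of `1/√((z-x)(y-z))` on `[x, y]`.
-/

open MeasureTheory intervalIntegral
open Set

/-- The absolute value of the quintic `z (z² - 1)(z² - a²)` at `a = b²`. -/
noncomputable def quint (b z : ℝ) : ℝ := |z * (z ^ 2 - 1) * (z ^ 2 - (b ^ 2) ^ 2)|

/-- Decreasing change of variables; no integrability of `G` is required, and the derivative may
blow up or vanish at the endpoints. -/
lemma integral_subst_anti {x y : ℝ} (hxy : x < y) {φ φ' G g : ℝ → ℝ}
    (hc : ContinuousOn φ (Icc x y)) (hd : ∀ z ∈ Ioo x y, HasDerivAt φ (φ' z) z)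
    (hneg : ∀ z ∈ Ioo x y, φ' z < 0)
    (hg : ∀ z ∈ Ioo x y, -φ' z * G (φ z) = g z) :
    ∫ z in x..y, g z = ∫ u in (φ y)..(φ x), G u := by
  have hanti : StrictAntiOn φ (Icc x y) := by
    apply strictAntiOn_of_deriv_neg (convex_Icc x y) hc
    intro z hz
    rw [interior_Icc] at hz
    rw [(hd z hz).deriv]
    exact hneg z hz
  have hx : x ∈ Icc x y := left_mem_Icc.2 hxy.le
  have hy : y ∈ Icc x y := right_mem_Icc.2 hxy.le
  have himg : φ '' Ioo x y = Ioo (φ y) (φ x) := by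
    apply Subset.antisymm
    · rintro _ ⟨z, hz, rfl⟩
      exact ⟨hanti (Ioo_subset_Icc_self hz) hy hz.2, hanti hx (Ioo_subset_Icc_self hz) hz.1⟩
    · exact intermediate_value_Ioo' hxy.le hc
  have key := integral_image_eq_integral_abs_deriv_smul (s := Ioo x y) measurableSet_Ioo
    (fun z hz => (hd z hz).hasDerivWithinAt) (hanti.injOn.mono Ioo_subset_Icc_self) G
  rw [himg] at key
  rw [intervalIntegral.integral_of_le hxy.le, intervalIntegral.integral_of_le (hanti hx hy hxy).le,
    integral_Ioc_eq_integral_Ioo, integral_Ioc_eq_integral_Ioo, key]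
  apply setIntegral_congr_fun measurableSet_Ioo
  intro z hz
  simp only [smul_eq_mul]
  rw [abs_of_neg (hneg z hz), hg z hz]

/-- The two endpoint singularities separate:
`1/√(st) ≤ (1/√s + 1/√t)/√(s+t)` for `s = z - x`, `t = y - z`. -/
lemma intervalIntegrable_inv_sqrt {x y : ℝ} (hxy : x < y) :
    IntervalIntegrable (fun z => (√((z - x) * (y - z)))⁻¹) volume x y := by
  have h0 : ∀ u v : ℝ, IntervalIntegrable (fun z : ℝ => z ^ (-(1/2) : ℝ)) volume u v :=
    fun u v => intervalIntegral.intervalIntegrable_rpow' (by norm_num)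
  have h1 : IntervalIntegrable (fun z : ℝ => (z - x) ^ (-(1/2) : ℝ)) volume x y := by
    simpa using (h0 0 (y - x)).comp_sub_right x
  have h2 : IntervalIntegrable (fun z : ℝ => (y - z) ^ (-(1/2) : ℝ)) volume x y := by
    simpa using (h0 (y - x) 0).comp_sub_left y
  refine ((h1.add h2).const_mul (√(y - x))⁻¹).mono_fun
    (Measurable.aestronglyMeasurable (by fun_prop)) ?_
  rw [uIoc_of_le hxy.le, ← restrict_Ioo_eq_restrict_Ioc]
  refine (ae_restrict_mem measurableSet_Ioo).mono ?_
  intro z hz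
  have hs : 0 < z - x := sub_pos.2 hz.1
  have ht : 0 < y - z := sub_pos.2 hz.2
  have hl : 0 < y - x := sub_pos.2 hxy
  beta_reduce
  rw [Real.norm_of_nonneg (by positivity), Real.norm_of_nonneg (by positivity),
    Real.rpow_neg hs.le, Real.rpow_neg ht.le, ← Real.sqrt_eq_rpow, ← Real.sqrt_eq_rpow,
    Real.sqrt_mul hs.le]
  have hs' := Real.sqrt_pos.2 hs
  have ht' := Real.sqrt_pos.2 ht
  have hl' := Real.sqrt_pos.2 hl
  have e1 := Real.sq_sqrt hs.le
  have e2 := Real.sq_sqrt ht.le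
  have e3 := Real.sq_sqrt hl.le
  have : √(y - x) ≤ √(z - x) + √(y - z) := by
    refine abs_le_of_sq_le_sq' ?_ (by positivity) |>.2
    nlinarith [mul_pos hs' ht']
  have e : (√(y - x))⁻¹ * ((√(z - x))⁻¹ + (√(y - z))⁻¹)
      = (√(z - x) * √(y - z))⁻¹ * ((√(z - x) + √(y - z)) / √(y - x)) := by
    field_simp
    ring
  rw [e]
  exact le_mul_of_one_le_right (by positivity) ((one_le_div hl').2 this)

lemma intervalIntegrable_div_sqrt_quint {b x y : ℝ} (hxy : x < y) {h n : ℝ → ℝ}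
    (hh : Continuous h) (hpos : ∀ z ∈ Icc x y, 0 < h z)
    (hf : ∀ z ∈ Icc x y, quint b z = (z - x) * (y - z) * h z) (hn : Continuous n) :
    IntervalIntegrable (fun z => n z / √(quint b z)) volume x y := by
  have hc : ContinuousOn (fun z => n z * (√(h z))⁻¹) (uIcc x y) := by
    rw [uIcc_of_le hxy.le]
    exact hn.continuousOn.mul
      (hh.sqrt.continuousOn.inv₀ fun z hz => (Real.sqrt_pos.2 (hpos z hz)).ne')
  refine ((intervalIntegrable_inv_sqrt hxy).continuousOn_mul hc).congr ?_
  intro z hz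
  rw [uIoc_of_le hxy.le] at hz
  have hz' := Ioc_subset_Icc_self hz
  simp only
  rw [hf z hz', Real.sqrt_mul (mul_nonneg (by linarith [hz'.1]) (by linarith [hz'.2])),
    div_eq_mul_inv, mul_inv]
  ring

lemma quint_left {b : ℝ} (hb : 1 < b) {z : ℝ} (hz : z ∈ Icc (0:ℝ) 1) :
    quint b z = (z - 0) * (1 - z) * ((1 + z) * (b ^ 2 - z) * (b ^ 2 + z)) := by
  obtain ⟨h0, h1⟩ := hz
  have hb2 : 1 < b ^ 2 := by nlinarith
  have e : z * (z ^ 2 - 1) * (z ^ 2 - (b ^ 2) ^ 2)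
      = (z - 0) * (1 - z) * ((1 + z) * (b ^ 2 - z) * (b ^ 2 + z)) := by ring
  rw [quint, e, abs_of_nonneg]
  have : 0 ≤ b ^ 2 - z := by linarith
  have : 0 ≤ 1 - z := by linarith
  have : 0 ≤ z - 0 := by linarith
  positivity

lemma quint_right {b z : ℝ} (hz : z ∈ Icc (1:ℝ) (b ^ 2)) :
    quint b z = (z - 1) * (b ^ 2 - z) * (z * (z + 1) * (b ^ 2 + z)) := by
  obtain ⟨h0, h1⟩ := hz
  have e : z * (z ^ 2 - 1) * (z ^ 2 - (b ^ 2) ^ 2)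
      = -((z - 1) * (b ^ 2 - z) * (z * (z + 1) * (b ^ 2 + z))) := by ring
  rw [quint, e, abs_neg, abs_of_nonneg]
  have : 0 ≤ b ^ 2 - z := by linarith
  have : 0 ≤ z - 1 := by linarith
  positivity

/-- The involution `z ↦ b² / z` exchanges the two basic differentials up to a factor. -/
lemma integral_involution {b y : ℝ} (hb : 1 < b) (h1 : 1 < y) :
    ∫ z in (1:ℝ)..y, (1 / b) * (z / √(quint b z)) = ∫ z in (b ^ 2 / y)..(b ^ 2), 1 / √(quint b z) := by
  have hb0 : 0 < b := by linarith
  have := integral_subst_anti h1 (φ := fun z => b ^ 2 / z) (φ' := fun z => -b ^ 2 / z ^ 2)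
    (G := fun z => 1 / √(quint b z)) (g := fun z => (1 / b) * (z / √(quint b z))) ?_ ?_ ?_ ?_
  · simpa using this
  · exact continuousOn_const.div continuousOn_id fun z hz =>
      (zero_lt_one.trans_le hz.1).ne'
  · intro z hz
    have hz0 : z ≠ 0 := by linarith [hz.1]
    have := (hasDerivAt_const z (b ^ 2)).div (hasDerivAt_id z) hz0
    exact this.congr_deriv (by simp)
  · intro z hz
    have hz0 : 0 < z := by linarith [hz.1]
    exact div_neg_of_neg_of_pos (by nlinarith) (by positivity)
  · intro z hz
    have hz0 : 0 < z := by linarith [hz.1]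
    have e : quint b (b ^ 2 / z) = (b ^ 3 / z ^ 3) ^ 2 * quint b z := by
      rw [quint, quint, ← abs_of_nonneg (sq_nonneg (b ^ 3 / z ^ 3)), ← abs_mul]
      congr 1
      field_simp
      ring
    rw [e, Real.sqrt_mul (sq_nonneg _), Real.sqrt_sq (by positivity)]
    by_cases hq : √(quint b z) = 0
    · simp [hq]
    · field_simp

/-- The integrand of the elliptic integral on which both quotients land. -/
noncomputable def ell (b u : ℝ) : ℝ := 1 / √((u - 2 * b) * ((1 + b ^ 2) ^ 2 - u ^ 2))

lemma integral_quotient_right {b : ℝ} (hb : 1 < b) :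
    ∫ z in (1:ℝ)..b, (b + z) / √(quint b z) = ∫ u in (2 * b)..(1 + b ^ 2), ell b u := by
  have hb0 : 0 < b := by linarith
  have := integral_subst_anti hb (φ := fun z => z + b ^ 2 / z) (φ' := fun z => 1 + -b ^ 2 / z ^ 2)
    (G := ell b) (g := fun z => (b + z) / √(quint b z)) ?_ ?_ ?_ ?_
  · have e : b + b ^ 2 / b = 2 * b := by field_simp; ring
    simpa [e] using this
  · exact continuousOn_id.add (continuousOn_const.div continuousOn_id fun z hz =>
      (zero_lt_one.trans_le hz.1).ne')
  · intro z hz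
    have hz0 : z ≠ 0 := by linarith [hz.1]
    have := (hasDerivAt_id z).add ((hasDerivAt_const z (b ^ 2)).div (hasDerivAt_id z) hz0)
    exact this.congr_deriv (by simp)
  · intro z hz
    have hz0 : 0 < z := by linarith [hz.1]
    have : 1 < b ^ 2 / z ^ 2 := by
      rw [one_lt_div (by positivity)]
      nlinarith [hz.2]
    rw [neg_div]; linarith
  · intro z hz
    have hz0 : 0 < z := by linarith [hz.1]
    have hbz : 0 < b - z := by linarith [hz.2]
    have e : (z + b ^ 2 / z - 2 * b) * ((1 + b ^ 2) ^ 2 - (z + b ^ 2 / z) ^ 2)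
        = ((b - z) / z ^ 2) ^ 2 * quint b z := by
      rw [quint_right ⟨hz.1.le, by nlinarith [hz.2]⟩]
      field_simp
      ring
    simp only [ell]
    rw [e, Real.sqrt_mul (sq_nonneg _), Real.sqrt_sq (by positivity)]
    by_cases hq : √(quint b z) = 0
    · simp [hq]
    · field_simp
      ring

/-- The substitution is `z ↦ t = z + b²/z` followed by the Möbius map `t ↦ c - k/(t + c)`, with
`c = 1 + b²` and `k = 2c(b-1)²`; the latter sends `c` to `2b` and `∞` to `c`. -/
lemma integral_quotient_left {b : ℝ} (hb : 1 < b) :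
    ∫ z in (0:ℝ)..1, (b - z) / √(quint b z) = ∫ u in (2 * b)..(1 + b ^ 2), ell b u := by
  have hb0 : 0 < b := by linarith
  have hb1 : 0 < b - 1 := by linarith
  have := integral_subst_anti one_pos
    (φ := fun z => (1 + b ^ 2) - 2 * (1 + b ^ 2) * (b - 1) ^ 2 * z / ((z + 1) * (z + b ^ 2)))
    (φ' := fun z => -(2 * (1 + b ^ 2) * (b - 1) ^ 2 * (b ^ 2 - z ^ 2)
      / ((z + 1) * (z + b ^ 2)) ^ 2))
    (G := ell b) (g := fun z => (b - z) / √(quint b z)) ?_ ?_ ?_ ?_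
  · rw [this]
    congr 1
    · field_simp; ring
    · simp
  · refine continuousOn_const.sub (ContinuousOn.div (by fun_prop) (by fun_prop) ?_)
    intro z hz
    have := hz.1
    positivity
  · intro z hz
    have hz0 : 0 < z := hz.1
    have hn : HasDerivAt (fun z : ℝ => 2 * (1 + b ^ 2) * (b - 1) ^ 2 * z)
        (2 * (1 + b ^ 2) * (b - 1) ^ 2) z := by
      simpa using (hasDerivAt_id z).const_mul (2 * (1 + b ^ 2) * (b - 1) ^ 2)
    have hm : HasDerivAt (fun z : ℝ => (z + 1) * (z + b ^ 2)) (1 * (z + b ^ 2) + (z + 1) * 1) z :=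
      ((hasDerivAt_id z).add_const 1).mul ((hasDerivAt_id z).add_const (b ^ 2))
    have := (hn.div hm (by positivity)).const_sub (1 + b ^ 2)
    exact this.congr_deriv (by congr 2; ring)
  · intro z hz
    have hz0 : 0 < z := hz.1
    have : 0 < b ^ 2 - z ^ 2 := by nlinarith [hz.2]
    rw [neg_lt_zero]
    positivity
  · intro z hz
    have hz0 : 0 < z := hz.1
    have hbz : 0 < b - z := by linarith [hz.2]
    have e : ((1 + b ^ 2) - 2 * (1 + b ^ 2) * (b - 1) ^ 2 * z / ((z + 1) * (z + b ^ 2)) - 2 * b)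
        * ((1 + b ^ 2) ^ 2 - ((1 + b ^ 2)
          - 2 * (1 + b ^ 2) * (b - 1) ^ 2 * z / ((z + 1) * (z + b ^ 2))) ^ 2)
        = (2 * (1 + b ^ 2) * (b - 1) ^ 2 * (z + b) / ((z + 1) * (z + b ^ 2)) ^ 2) ^ 2
          * quint b z := by
      rw [quint_left hb ⟨hz0.le, hz.2.le⟩]
      field_simp
      ring
    simp only [ell]
    rw [e, Real.sqrt_mul (sq_nonneg _), Real.sqrt_sq (by positivity)]
    by_cases hq : √(quint b z) = 0
    · simp [hq]
    · field_simp
      ring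

/-- For `a > 1` and `f z = z (z² - 1)(z² - a²)`, the period integrals
`p = ∫₁^a dz/√|f|`, `q = ∫₀¹ dz/√|f|`, `r = -∫₁^a z dz/√|f|`, `s = ∫₀¹ z dz/√|f|`
satisfy `p r - p s - q r = 0`. -/
theorem stmt_2 (a : ℝ) (ha : 1 < a) :
    let f : ℝ → ℝ := fun z => z * (z ^ 2 - 1) * (z ^ 2 - a ^ 2)
    let p : ℝ := ∫ z in (1 : ℝ)..a, 1 / Real.sqrt |f z|
    let q : ℝ := ∫ z in (0 : ℝ)..1, 1 / Real.sqrt |f z|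
    let r : ℝ := -∫ z in (1 : ℝ)..a, z / Real.sqrt |f z|
    let s : ℝ := ∫ z in (0 : ℝ)..1, z / Real.sqrt |f z|
    p * r - p * s - q * r = 0 := by
  obtain ⟨b, hb, rfl⟩ : ∃ b : ℝ, 1 < b ∧ b ^ 2 = a :=
    ⟨√a, Real.lt_sqrt_of_sq_lt (by simpa using ha), Real.sq_sqrt (by linarith)⟩
  intro f p q r s
  have hb0 : 0 < b := by linarith
  have hbb : b < b ^ 2 := by nlinarith
  have intL : ∀ n : ℝ → ℝ, Continuous n →
      IntervalIntegrable (fun z => n z / √(quint b z)) volume 0 1 := fun n hn =>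
    intervalIntegrable_div_sqrt_quint one_pos (by fun_prop)
      (fun z hz => by
        have h0 := hz.1
        have : 0 < b ^ 2 - z := by linarith [hz.2]
        positivity)
      (fun z hz => quint_left hb hz) hn
  have intR : ∀ n : ℝ → ℝ, Continuous n →
      IntervalIntegrable (fun z => n z / √(quint b z)) volume 1 (b ^ 2) := fun n hn =>
    intervalIntegrable_div_sqrt_quint ha (by fun_prop)
      (fun z hz => by
        have h0 : 0 < z := by linarith [hz.1]
        positivity)
      (fun z hz => quint_right hz) hn
  have sub1 : uIcc 1 b ⊆ uIcc 1 (b ^ 2) := by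
    rw [uIcc_of_le hb.le, uIcc_of_le ha.le]; exact Icc_subset_Icc_right hbb.le
  have sub2 : uIcc b (b ^ 2) ⊆ uIcc 1 (b ^ 2) := by
    rw [uIcc_of_le hbb.le, uIcc_of_le ha.le]; exact Icc_subset_Icc_left hb.le
  have c1 : Continuous fun _ : ℝ => (1 : ℝ) := continuous_const
  have cz : Continuous fun z : ℝ => z := continuous_id
  have hR : (1 / b) * (-r) = p := by
    have := integral_involution hb ha
    rw [intervalIntegral.integral_const_mul, div_self (by positivity)] at this
    rw [neg_neg]
    exact this
  have hp : p = (∫ z in (1:ℝ)..b, 1 / √(quint b z))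
      + (1 / b) * ∫ z in (1:ℝ)..b, z / √(quint b z) := by
    have := integral_involution hb hb
    rw [intervalIntegral.integral_const_mul, show b ^ 2 / b = b by field_simp] at this
    rw [this]
    exact (intervalIntegral.integral_add_adjacent_intervals
      ((intR _ c1).mono_set sub1) ((intR _ c1).mono_set sub2)).symm
  have hI : b * p = ∫ u in (2 * b)..(1 + b ^ 2), ell b u := by
    rw [← integral_quotient_right hb, hp, mul_add, ← mul_assoc, mul_one_div_cancel hb0.ne',
      one_mul, ← intervalIntegral.integral_const_mul, ← intervalIntegral.integral_add
        (((intR _ c1).mono_set sub1).const_mul b) ((intR _ cz).mono_set sub1)]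
    congr 1
    funext z
    ring
  have hJ : b * q - s = ∫ u in (2 * b)..(1 + b ^ 2), ell b u := by
    have h : b * q - s = b * (∫ z in (0:ℝ)..1, 1 / √(quint b z))
      - ∫ z in (0:ℝ)..1, z / √(quint b z) := rfl
    rw [h, ← integral_quotient_left hb, ← intervalIntegral.integral_const_mul,
      ← intervalIntegral.integral_sub ((intL _ c1).const_mul b) (intL _ cz)]
    congr 1
    funext z
    ring
  have hr : r = -(b * p) := by
    rw [← hR]; field_simp
  have hs : s = b * q - b * p := by linarith
  rw [hr, hs]
  ring
end

section
/- Let a > 1 be a real number, set f(z) = z(z²−1)(z²−a²), and define p = ∫₁^a dz/√|f(z)|, q = ∫₀¹ dz/√|f(z)|, r = −∫₁^a z·dz/√|f(z)|, s = ∫₀¹ z·dz/√|f(z)|. Then ps − qr > 0 and the real symmetric 2×2 matrix (1/(ps−qr))·[[2qs−pr, pr],[pr, −2pr]] is positive definite. -/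
/-!
All four integrands are positive and their singularities are of inverse-square-root type, so the
integrals converge and `p, q, s > 0 > r`. The theorem is then algebra: with `R = -r > 0`,
`p s - q r = p s + q R > 0`, and the matrix `[[2qs + pR, -pR], [-pR, 2pR]]` has quadratic form
`2 q s x² + p R (x - y)² + p R y²`. Convergence is the content of
`intervalIntegrable_one_div_sqrt`; it matters because a divergent Bochner integral would be `0`.
-/

open MeasureTheory intervalIntegral

/-- If `|g|` is bounded below by a multiple of `(z - u) (v - z)` on `(u, v)`, then `1 / √|g|` is
integrable there: since `√(v - u) ≤ √(z - u) + √(v - z)`, it is dominated by a multiple of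
`1 / √(z - u) + 1 / √(v - z)`. -/
lemma intervalIntegrable_one_div_sqrt {g : ℝ → ℝ} (hg : Measurable g) {u v c : ℝ} (huv : u < v)
    (hc : 0 < c) (h : ∀ z ∈ Set.Ioo u v, c * ((z - u) * (v - z)) ≤ |g z|) :
    IntervalIntegrable (fun z => 1 / Real.sqrt |g z|) volume u v := by
  have hpow : ∀ b : ℝ, IntervalIntegrable (fun x : ℝ => x ^ (-(1 / 2) : ℝ)) volume 0 b :=
    fun b => intervalIntegrable_rpow' (by norm_num)
  have h1 : IntervalIntegrable (fun z : ℝ => (z - u) ^ (-(1 / 2) : ℝ)) volume u v := by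
    simpa using (hpow (v - u)).comp_sub_right u
  have h2 : IntervalIntegrable (fun z : ℝ => (v - z) ^ (-(1 / 2) : ℝ)) volume u v := by
    simpa using ((hpow (v - u)).comp_sub_left v).symm
  have h3 := (h1.add h2).const_mul (1 / Real.sqrt (c * (v - u)))
  rw [intervalIntegrable_iff_integrableOn_Ioo_of_le huv.le] at h3 ⊢
  have hm : Measurable fun z => 1 / Real.sqrt |g z| := by
    simp only [← Real.norm_eq_abs]
    exact measurable_const.div hg.norm.sqrt
  refine Integrable.mono' h3 hm.aestronglyMeasurable ?_
  refine ae_restrict_of_forall_mem measurableSet_Ioo fun z hz => ?_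
  have hx : 0 < z - u := sub_pos.2 hz.1
  have hy : 0 < v - z := sub_pos.2 hz.2
  have hsx := Real.sqrt_pos.2 hx
  have hsy := Real.sqrt_pos.2 hy
  have hsc := Real.sqrt_pos.2 hc
  have hsL := Real.sqrt_pos.2 (sub_pos.2 huv)
  have hle : Real.sqrt (v - u) ≤ Real.sqrt (z - u) + Real.sqrt (v - z) := by
    rw [Real.sqrt_le_left (by positivity)]
    nlinarith [Real.sq_sqrt hx.le, Real.sq_sqrt hy.le, mul_pos hsx hsy]
  rw [Real.norm_of_nonneg (by positivity)]
  simp only [Real.rpow_neg hx.le, Real.rpow_neg hy.le, ← Real.sqrt_eq_rpow]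
  calc 1 / Real.sqrt |g z| ≤ 1 / Real.sqrt (c * ((z - u) * (v - z))) :=
        one_div_le_one_div_of_le (by positivity) (Real.sqrt_le_sqrt (h z hz))
    _ = 1 / (Real.sqrt c * Real.sqrt (v - u)) *
          (Real.sqrt (v - u) / (Real.sqrt (z - u) * Real.sqrt (v - z))) := by
        rw [Real.sqrt_mul hc.le, Real.sqrt_mul hx.le]; field_simp
    _ ≤ 1 / (Real.sqrt c * Real.sqrt (v - u)) *
          ((Real.sqrt (z - u) + Real.sqrt (v - z)) /
            (Real.sqrt (z - u) * Real.sqrt (v - z))) := by gcongr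
    _ = _ := by rw [Real.sqrt_mul hc.le]; field_simp; ring

/-- The integrals of `1 / √|g|` and `z / √|g|` over an interval in `[0, ∞)` are positive. -/
lemma integral_pos_pair {g : ℝ → ℝ} (hg : Measurable g) {u v c : ℝ} (hu : 0 ≤ u) (huv : u < v)
    (hc : 0 < c) (h : ∀ z ∈ Set.Ioo u v, c * ((z - u) * (v - z)) ≤ |g z|) :
    0 < (∫ z in u..v, 1 / Real.sqrt |g z|) ∧ 0 < ∫ z in u..v, z / Real.sqrt |g z| := by
  have hint := intervalIntegrable_one_div_sqrt hg huv hc h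
  have hpos : ∀ z ∈ Set.Ioo u v, 0 < Real.sqrt |g z| := fun z hz =>
    Real.sqrt_pos.2 <| lt_of_lt_of_le
      (mul_pos hc (mul_pos (sub_pos.2 hz.1) (sub_pos.2 hz.2))) (h z hz)
  refine ⟨intervalIntegral_pos_of_pos_on hint (fun z hz => one_div_pos.2 (hpos z hz)) huv,
    intervalIntegral_pos_of_pos_on ?_
      (fun z hz => div_pos (lt_of_le_of_lt hu hz.1) (hpos z hz)) huv⟩
  simpa only [id, mul_one_div] using hint.continuousOn_mul (g := id) continuousOn_id

/-- For `a > 1` and `f z = z (z² - 1)(z² - a²)`, with the period integrals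
`p, q, r, s` as in the paper, we have `p s - q r > 0` and the real symmetric matrix
`(1/(ps - qr)) • [[2qs - pr, pr], [pr, -2pr]]` (the imaginary part of the period
matrix of the genus-2 curve `w² = f(z)`) is positive definite. -/
theorem stmt_3 (a : ℝ) (ha : 1 < a) :
    let f : ℝ → ℝ := fun z => z * (z ^ 2 - 1) * (z ^ 2 - a ^ 2)
    let p : ℝ := ∫ z in (1 : ℝ)..a, 1 / Real.sqrt |f z|
    let q : ℝ := ∫ z in (0 : ℝ)..1, 1 / Real.sqrt |f z|
    let r : ℝ := -∫ z in (1 : ℝ)..a, z / Real.sqrt |f z|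
    let s : ℝ := ∫ z in (0 : ℝ)..1, z / Real.sqrt |f z|
    0 < p * s - q * r ∧
      Matrix.PosDef
        ((1 / (p * s - q * r)) •
          !![2 * q * s - p * r, p * r; p * r, -2 * p * r]) := by
  intro f p q r s
  have hf : Measurable f := by fun_prop
  obtain ⟨hp, hR⟩ : 0 < p ∧ 0 < ∫ z in (1 : ℝ)..a, z / Real.sqrt |f z| := by
    refine integral_pos_pair hf zero_le_one ha one_pos fun z hz => ?_
    obtain ⟨h1, h2⟩ := hz
    have hw : 0 < (z - 1) * (a - z) := mul_pos (sub_pos.2 h1) (sub_pos.2 h2)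
    have hk : 1 ≤ z * ((z + 1) * (a + z)) := by
      have : 1 ≤ (z + 1) * (a + z) := by nlinarith
      nlinarith
    calc 1 * ((z - 1) * (a - z)) ≤ z * ((z + 1) * (a + z)) * ((z - 1) * (a - z)) := by gcongr
      _ = -f z := by simp only [f]; ring
      _ ≤ |f z| := neg_le_abs _
  obtain ⟨hq, hs⟩ : 0 < q ∧ 0 < s := by
    have ha2 : 0 < a ^ 2 - 1 := by nlinarith
    refine integral_pos_pair hf le_rfl one_pos ha2 fun z hz => ?_
    obtain ⟨h1, h2⟩ := hz
    have hw : 0 < (z - 0) * (1 - z) := by nlinarith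
    have hk : a ^ 2 - 1 ≤ (z + 1) * (a ^ 2 - z ^ 2) := by
      nlinarith [mul_pos h1 (show 0 < a ^ 2 - z ^ 2 by nlinarith)]
    calc (a ^ 2 - 1) * ((z - 0) * (1 - z))
        ≤ (z + 1) * (a ^ 2 - z ^ 2) * ((z - 0) * (1 - z)) := by gcongr
      _ = f z := by simp only [f]; ring
      _ ≤ |f z| := le_abs_self _
  have hr : r < 0 := neg_lt_zero.2 hR
  have hpr : 0 < p * -r := mul_pos hp (neg_pos.2 hr)
  have hqs : 0 < q * s := mul_pos hq hs
  have hD : 0 < p * s - q * r := by nlinarith [mul_pos hp hs, mul_pos hq (neg_pos.2 hr)]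
  clear_value p q r s
  refine ⟨hD, Matrix.PosDef.smul ?_ (one_div_pos.2 hD)⟩
  refine Matrix.PosDef.of_dotProduct_mulVec_pos ?_ fun x hx => ?_
  · ext i j
    fin_cases i <;> fin_cases j <;> simp
  · have hx' : x 0 ≠ 0 ∨ x 1 ≠ 0 := by
      by_contra! h0
      exact hx (by ext i; fin_cases i <;> simp [h0])
    have hform : 0 < 2 * (q * s) * x 0 ^ 2 + p * -r * (x 0 - x 1) ^ 2 + p * -r * x 1 ^ 2 := by
      rcases hx' with h0 | h0 <;> positivity
    simp only [dotProduct, Matrix.mulVec, Fin.sum_univ_two, Pi.star_apply, star_trivial,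
      Matrix.of_apply, Matrix.cons_val_zero, Matrix.cons_val_one, Matrix.cons_val']
    simp
    linarith
end

section
/- Let g ≥ 2 and 1 < a₁ < ⋯ < a_{g−1}, and let f(z) = z(z²−1)(z²−a₁²)⋯(z²−a_{g−1}²). Define the g×g real matrix Π₀ = [I_{j,k}] as follows. If g is even: I_{j,k} = (−1)^{j−1}∫_{a_{g−2k}}^{a_{g−2k+1}} z^{j−1}dz/√|f(z)| for 1 ≤ k ≤ g/2 − 1; I_{j,k} = (−1)^{j−1}∫_1^{a₁} z^{j−1}dz/√|f(z)| for k = g/2; I_{j,k} = ∫_0^1 z^{j−1}dz/√|f(z)| for k = g/2 + 1; and I_{j,k} = ∫_{a_{2k−g−3}}^{a_{2k−g−2}} z^{j−1}dz/√|f(z)| for g/2 + 2 ≤ k ≤ g (with the convention a₀ = 1). If g is odd: I_{j,k} = (−1)^{j−1}∫_{a_{g−2k}}^{a_{g−2k+1}} z^{j−1}dz/√|f(z)| for 1 ≤ k ≤ (g−1)/2; I_{j,k} = (−1)^{j−1}∫_0^1 z^{j−1}dz/√|f(z)| for k = (g+1)/2; I_{j,k} = ∫_1^{a₁} z^{j−1}dz/√|f(z)|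 for k = (g+3)/2; and I_{j,k} = ∫_{a_{2k−g−3}}^{a_{2k−g−2}} z^{j−1}dz/√|f(z)| for (g+5)/2 ≤ k ≤ g (with a₀ = 1). Then Π₀ is invertible. -/
/-!
Let `f z = z * ∏ i < g, (z ^ 2 - a i ^ 2)`. For `j, k : Fin g` the `(j, k)` entry of
`PiZero g a` is a moment
`∫ (s_k z) ^ j / √|f z| dz` over one of the `g` intervals cut out of `[0, a (g - 1)]` by the
nonnegative roots `0 < a 0 < ⋯ < a (g - 1)` of `f`, where `s_k = ±1`, and every interval is used by
exactly one column (`PiZero_apply`, `intervalIndex_injective`).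

If the determinant vanished, some nonzero polynomial `p` of degree less than `g` would satisfy
`∫ p (s_k z) / √|f z| dz = 0` for every `k`. The weight is positive and integrable
(`intervalIntegrable_weight`), so `p` has a root `s_k z_k` with `z_k` inside the `k`-th interval
(`exists_root_of_integral_eq_zero`). The `|s_k z_k|` lie in disjoint intervals, so `p` has `g` distinct
roots, contradicting the nonvanishing of the Vandermonde determinant.

Integrability of the weight comes from the partial fraction expansion of `1 / f` in the variable `z ^ 2`,
which bounds `1 / √|f z|` by a combination of the functions `|z - u| ^ (-1 / 2)`, `u` a root of `f`.
-/

open MeasureTheory intervalIntegral Matrix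

/-- The `g × g` real matrix `Π₀ = [I_{j,k}]` of hyperelliptic integrals of the curve
`w² = f(z)`, `f z = z ∏_{i<g} (z² - a i ²)` (with the convention `a 0 = 1`), defined
according to the parity of `g` as in the paper.  Indices `j k : Fin g` correspond to
the 1-based indices `J = j + 1`, `K = k + 1`. -/
noncomputable def PiZero (g : ℕ) (a : ℕ → ℝ) : Matrix (Fin g) (Fin g) ℝ :=
  Matrix.of fun j k : Fin g =>
    let J : ℕ := (j : ℕ) + 1
    let K : ℕ := (k : ℕ) + 1
    let f : ℝ → ℝ := fun z => z * ∏ i ∈ Finset.range g, (z ^ 2 - a i ^ 2)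
    if g % 2 = 0 then
      if K ≤ g / 2 - 1 then
        (-1 : ℝ) ^ (J - 1) *
          ∫ z in (a (g - 2 * K))..(a (g - 2 * K + 1)), z ^ (J - 1) / Real.sqrt |f z|
      else if K = g / 2 then
        (-1 : ℝ) ^ (J - 1) *
          ∫ z in (1 : ℝ)..(a 1), z ^ (J - 1) / Real.sqrt |f z|
      else if K = g / 2 + 1 then
        ∫ z in (0 : ℝ)..(1 : ℝ), z ^ (J - 1) / Real.sqrt |f z|
      else
        ∫ z in (a (2 * K - g - 3))..(a (2 * K - g - 2)), z ^ (J - 1) / Real.sqrt |f z|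
    else
      if K ≤ (g - 1) / 2 then
        (-1 : ℝ) ^ (J - 1) *
          ∫ z in (a (g - 2 * K))..(a (g - 2 * K + 1)), z ^ (J - 1) / Real.sqrt |f z|
      else if K = (g + 1) / 2 then
        (-1 : ℝ) ^ (J - 1) *
          ∫ z in (0 : ℝ)..(1 : ℝ), z ^ (J - 1) / Real.sqrt |f z|
      else if K = (g + 3) / 2 then
        ∫ z in (1 : ℝ)..(a 1), z ^ (J - 1) / Real.sqrt |f z|
      else
        ∫ z in (a (2 * K - g - 3))..(a (2 * K - g - 2)), z ^ (J - 1) / Real.sqrt |f z|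

/-! ### Roots, weight and the bookkeeping of columns -/

/-- The sequence `0, a 0, a 1, …`; under the hypotheses of the theorem its first `g + 1` terms are
the nonnegative roots of `f`, in increasing order. -/
def node (a : ℕ → ℝ) : ℕ → ℝ
  | 0 => 0
  | i + 1 => a i

/-- The density `1 / √|f z|`; at the roots of `f` its value is the junk value `0`. -/
noncomputable def weight (g : ℕ) (a : ℕ → ℝ) (z : ℝ) : ℝ :=
  (Real.sqrt |z * ∏ i ∈ Finset.range g, (z ^ 2 - a i ^ 2)|)⁻¹

/-- The position, from the origin, of the interval over which the `k`-th column integrates: the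
interval runs from `node a m` to `node a (m + 1)`. The index `k` is 0-based. -/
def intervalIndex (g k : ℕ) : ℕ :=
  if 2 * (k + 1) ≤ g + 1 then g + 1 - 2 * (k + 1) else 2 * (k + 1) - g - 2

/-- The sign `s` for which the `k`-th column consists of moments of `s * z`. -/
def colSign (g k : ℕ) : ℝ := if 2 * (k + 1) ≤ g + 1 then -1 else 1

lemma intervalIndex_lt {g k : ℕ} (hk : k < g) : intervalIndex g k < g := by
  unfold intervalIndex; split_ifs <;> omega

/-- Columns with sign `-1` and `1` use indices of opposite parity. -/
lemma intervalIndex_injective {g k l : ℕ} (h : intervalIndex g k = intervalIndex g l) : k = l := by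
  unfold intervalIndex at h; split_ifs at h <;> omega

lemma abs_colSign (g k : ℕ) : |colSign g k| = 1 := by
  unfold colSign; split_ifs <;> simp

lemma node_strictMonoOn {g : ℕ} {a : ℕ → ℝ} (ha0 : a 0 = 1)
    (hmono : StrictMonoOn a (Set.Iio g)) : StrictMonoOn (node a) (Set.Iio (g + 1)) := by
  intro i hi j hj hij
  simp only [Set.mem_Iio] at hi hj
  obtain ⟨j, rfl⟩ : ∃ j', j = j' + 1 := ⟨j - 1, by omega⟩
  cases i with
  | zero =>
    have : a 0 ≤ a j := hmono.monotoneOn (by simp; omega) (by simp; omega) (Nat.zero_le _)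
    simp only [node]; linarith
  | succ i => exact hmono (by simp; omega) (by simp; omega) (by omega)

lemma node_nonneg {g : ℕ} {a : ℕ → ℝ} (hu : StrictMonoOn (node a) (Set.Iio (g + 1))) {i : ℕ}
    (hi : i < g + 1) : 0 ≤ node a i :=
  hu.monotoneOn (a := 0) (by simp) (by simpa using hi) (Nat.zero_le _)

/-! ### Integrability and positivity of the weight -/

lemma prod_node (g : ℕ) (a : ℕ → ℝ) (z : ℝ) :
    ∏ i ∈ Finset.range (g + 1), (z ^ 2 - node a i ^ 2) =
      z * (z * ∏ i ∈ Finset.range g, (z ^ 2 - a i ^ 2)) := by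
  rw [Finset.prod_range_succ']
  simp only [node]
  ring

lemma intervalIntegrable_sqrt_inv_abs_sub (u p q : ℝ) :
    IntervalIntegrable (fun z => Real.sqrt |z - u|⁻¹) volume p q := by
  have h0 : IntervalIntegrable (fun z : ℝ => Real.sqrt |z|⁻¹) volume (p - u) (q - u) := by
    refine intervalIntegrable_of_even (by simp) fun x hx => ?_
    refine (intervalIntegrable_rpow' (r := -(1 / 2)) (by norm_num)).congr ?_
    intro z hz
    rw [Set.uIoc_of_le hx.le] at hz
    simp only
    rw [abs_of_pos hz.1, Real.sqrt_inv, Real.sqrt_eq_rpow, Real.rpow_neg hz.1.le]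
  simpa using h0.comp_sub_right u

lemma sqrt_le_sum_sqrt {ι : Type*} (s : Finset ι) (y : ι → ℝ) (hy : ∀ i ∈ s, 0 ≤ y i) {x : ℝ}
    (hx : x ≤ ∑ i ∈ s, y i) : Real.sqrt x ≤ ∑ i ∈ s, Real.sqrt (y i) := by
  refine Real.sqrt_le_iff.2 ⟨Finset.sum_nonneg fun i _ => Real.sqrt_nonneg _, hx.trans ?_⟩
  calc ∑ i ∈ s, y i = ∑ i ∈ s, Real.sqrt (y i) ^ 2 :=
        Finset.sum_congr rfl fun i hi => (Real.sq_sqrt (hy i hi)).symm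
    _ ≤ _ := Finset.sum_sq_le_sq_sum_of_nonneg fun i _ => Real.sqrt_nonneg _

/-- Partial fractions in `z ^ 2` bound the weight by its inverse square root singularities. -/
lemma weight_le {g : ℕ} {a : ℕ → ℝ} (hu : StrictMonoOn (node a) (Set.Iio (g + 1))) :
    ∃ c : ℕ → ℝ, ∀ z : ℝ, 0 < z →
      weight g a z ≤ ∑ i ∈ Finset.range (g + 1), Real.sqrt (c i) * Real.sqrt |z - node a i|⁻¹ := by
  set v : ℕ → ℝ := fun i => node a i ^ 2 with hv
  have hinj : Set.InjOn v (Finset.range (g + 1)) := by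
    intro i hi j hj hij
    simp only [Finset.coe_range, Set.mem_Iio] at hi hj
    have := (sq_eq_sq₀ (node_nonneg hu hi) (node_nonneg hu hj)).1 hij
    exact hu.injOn hi hj this
  set c := Lagrange.nodalWeight (Finset.range (g + 1)) v
  refine ⟨fun i => |c i|, fun z hz => ?_⟩
  by_cases hf : z * ∏ i ∈ Finset.range g, (z ^ 2 - a i ^ 2) = 0
  · simp only [weight, hf, abs_zero, Real.sqrt_zero, _root_.inv_zero]
    exact Finset.sum_nonneg fun i _ => by positivity
  have hP : ∏ i ∈ Finset.range (g + 1), (z ^ 2 - v i) ≠ 0 := by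
    rw [prod_node]; exact mul_ne_zero hz.ne' hf
  have hne : ∀ i ∈ Finset.range (g + 1), z ^ 2 ≠ v i := fun i hi =>
    sub_ne_zero.1 (Finset.prod_ne_zero_iff.1 hP i hi)
  have hone : (z * (z * ∏ i ∈ Finset.range g, (z ^ 2 - a i ^ 2))) *
      ∑ i ∈ Finset.range (g + 1), c i * (z ^ 2 - v i)⁻¹ = 1 := by
    have h := congrArg (Polynomial.eval (z ^ 2))
      (Lagrange.sum_basis hinj (Finset.nonempty_range_iff.2 (Nat.succ_ne_zero g)))
    rw [Polynomial.eval_finsetSum, Polynomial.eval_one] at h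
    rw [← h, ← prod_node, Finset.mul_sum]
    refine Finset.sum_congr rfl fun i hi => ?_
    rw [Lagrange.eval_basis_not_at_node hi (hne i hi), Lagrange.eval_nodal]
  set F := z * ∏ i ∈ Finset.range g, (z ^ 2 - a i ^ 2) with hF
  have hinv : F⁻¹ = ∑ i ∈ Finset.range (g + 1), c i * (z * (z ^ 2 - v i)⁻¹) := by
    have : ∑ i ∈ Finset.range (g + 1), c i * (z * (z ^ 2 - v i)⁻¹) =
        z * ∑ i ∈ Finset.range (g + 1), c i * (z ^ 2 - v i)⁻¹ := by
      rw [Finset.mul_sum]; exact Finset.sum_congr rfl fun i _ => by ring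
    rw [this]
    refine inv_eq_of_mul_eq_one_right ?_
    rw [← hone]; ring
  have hbound : |F|⁻¹ ≤ ∑ i ∈ Finset.range (g + 1), |c i| * |z - node a i|⁻¹ := by
    rw [← abs_inv, hinv]
    refine (Finset.abs_sum_le_sum_abs _ _).trans (Finset.sum_le_sum fun i hi => ?_)
    rw [abs_mul]
    refine mul_le_mul_of_nonneg_left ?_ (abs_nonneg _)
    have hn := node_nonneg hu (Finset.mem_range.1 hi)
    have h1 : 0 < |z - node a i| := abs_pos.2 fun h => hne i hi (by rw [sub_eq_zero.1 h])
    have h2 : z ^ 2 - v i = (z + node a i) * (z - node a i) := by simp only [hv]; ring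
    rw [h2, abs_mul, abs_inv, abs_mul, abs_of_pos hz, abs_of_pos (by linarith : 0 < z + node a i),
      mul_inv, ← mul_assoc]
    refine mul_le_of_le_one_left (by positivity) ?_
    rw [← div_eq_mul_inv]
    exact div_le_one_of_le₀ (by linarith) (by linarith)
  rw [weight, ← Real.sqrt_inv]
  refine (sqrt_le_sum_sqrt _ _ (fun i _ => by positivity) hbound).trans (le_of_eq ?_)
  exact Finset.sum_congr rfl fun i _ => Real.sqrt_mul (abs_nonneg _) _

lemma intervalIntegrable_weight {g : ℕ} {a : ℕ → ℝ}
    (hu : StrictMonoOn (node a) (Set.Iio (g + 1))) {p q : ℝ} (hp : 0 ≤ p) (hpq : p ≤ q) :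
    IntervalIntegrable (weight g a) volume p q := by
  obtain ⟨c, hc⟩ := weight_le hu
  have hI : IntervalIntegrable (fun z => ∑ i ∈ Finset.range (g + 1),
      Real.sqrt (c i) * Real.sqrt |z - node a i|⁻¹) volume p q := by
    have := IntervalIntegrable.sum (μ := volume) (a := p) (b := q) (Finset.range (g + 1))
      (f := fun i z => Real.sqrt (c i) * Real.sqrt |z - node a i|⁻¹)
      fun i _ => (intervalIntegrable_sqrt_inv_abs_sub (node a i) p q).const_mul _
    simpa [Finset.sum_fn] using this
  refine hI.mono_fun' ?_ ?_
  · have : Measurable (weight g a) := by unfold weight; fun_prop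
    exact this.aestronglyMeasurable
  · refine (ae_restrict_iff' measurableSet_uIoc).2 (Filter.Eventually.of_forall fun z hz => ?_)
    rw [Set.uIoc_of_le hpq] at hz
    have h0 : 0 ≤ weight g a z := by unfold weight; positivity
    simp only [Real.norm_of_nonneg h0]
    exact hc z (hp.trans_lt hz.1)

lemma weight_pos {g : ℕ} {a : ℕ → ℝ} (hu : StrictMonoOn (node a) (Set.Iio (g + 1))) {m : ℕ}
    (hm : m < g) {z : ℝ} (hz : z ∈ Set.Ioo (node a m) (node a (m + 1))) : 0 < weight g a z := by
  have hz0 : 0 < z := (node_nonneg hu (by omega)).trans_lt hz.1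
  have hP : ∏ i ∈ Finset.range (g + 1), (z ^ 2 - node a i ^ 2) ≠ 0 := by
    refine Finset.prod_ne_zero_iff.2 fun i hi h => ?_
    have hi := Finset.mem_range.1 hi
    have hzi : z = node a i := (sq_eq_sq₀ hz0.le (node_nonneg hu hi)).1 (sub_eq_zero.1 h)
    rw [hzi] at hz
    have h1 := (hu.lt_iff_lt (by simp; omega) (by simpa using hi)).1 hz.1
    have h2 := (hu.lt_iff_lt (by simpa using hi) (by simp; omega)).1 hz.2
    omega
  rw [prod_node] at hP
  have := right_ne_zero_of_mul hP
  unfold weight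
  positivity

/-! ### Roots of polynomials annihilated by the columns -/

/-- A continuous function without zeros between two consecutive nodes has constant sign there, so
its integral against the positive weight cannot vanish. -/
lemma exists_root_of_integral_eq_zero {g : ℕ} {a : ℕ → ℝ}
    (hu : StrictMonoOn (node a) (Set.Iio (g + 1))) {m : ℕ} (hm : m < g) {p : ℝ → ℝ}
    (hp : Continuous p) (hint : ∫ z in (node a m)..(node a (m + 1)), p z * weight g a z = 0) :
    ∃ z ∈ Set.Ioo (node a m) (node a (m + 1)), p z = 0 := by
  have hlt : node a m < node a (m + 1) := hu (by simp; omega) (by simpa using hm) (by omega)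
  -- Applied to `q = p` and `q = -p`, this yields points where `p ≤ 0` and where `p ≥ 0`.
  have key : ∀ q : ℝ → ℝ, Continuous q →
      ∫ z in (node a m)..(node a (m + 1)), q z * weight g a z = 0 →
      ∃ z ∈ Set.Ioo (node a m) (node a (m + 1)), q z ≤ 0 := by
    intro q hq hq0
    by_contra! hcon
    refine (intervalIntegral_pos_of_pos_on ?_ (fun z hz => ?_) hlt).ne' hq0
    · exact (intervalIntegrable_weight hu (node_nonneg hu (by omega)) hlt.le).continuousOn_mul
        hq.continuousOn
    · exact mul_pos (hcon z hz) (weight_pos hu hm hz)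
  obtain ⟨x, hx, hx0⟩ := key p hp hint
  obtain ⟨y, hy, hy0⟩ := key (fun z => -p z) hp.neg (by simp [hint])
  exact isPreconnected_Ioo.intermediate_value hx hy hp.continuousOn ⟨hx0, by simpa using hy0⟩

/-- Both parities of `g` and all cases in the definition of `PiZero` are instances of one
formula. -/
lemma PiZero_apply {g : ℕ} (hg : 2 ≤ g) {a : ℕ → ℝ} (ha0 : a 0 = 1) (j k : Fin g) :
    PiZero g a j k =
      ∫ z in (node a (intervalIndex g k))..(node a (intervalIndex g k + 1)),
        (colSign g k * z) ^ (j : ℕ) * weight g a z := by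
  have hk := k.2
  have hpull : ∀ p q s : ℝ, ∫ z in p..q, (s * z) ^ (j : ℕ) * weight g a z =
      s ^ (j : ℕ) * ∫ z in p..q, z ^ (j : ℕ) * weight g a z := by
    intro p q s
    rw [← intervalIntegral.integral_const_mul]
    simp only [mul_pow, mul_assoc]
  have hnode : ∀ n m : ℕ, m = n + 1 → node a m = a n := by rintro n _ rfl; rfl
  have hnode0 : ∀ m : ℕ, m = 0 → node a m = 0 := by rintro _ rfl; rfl
  have hnode1 : ∀ m : ℕ, m = 1 → node a m = 1 := by rintro _ rfl; exact ha0
  rw [hpull]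
  simp only [PiZero, Matrix.of_apply, Nat.add_sub_cancel, div_eq_mul_inv]
  unfold colSign intervalIndex
  simp only [weight]
  by_cases hpar : g % 2 = 0
  · rw [if_pos hpar]
    by_cases h1 : (k : ℕ) + 1 ≤ g / 2 - 1
    · rw [if_pos h1, if_pos (by omega), if_pos (by omega), hnode (g - 2 * (k + 1)) _ (by omega),
        hnode (g - 2 * (k + 1) + 1) _ (by omega)]
    rw [if_neg h1]
    by_cases h2 : (k : ℕ) + 1 = g / 2
    · rw [if_pos h2, if_pos (by omega), if_pos (by omega), hnode1 _ (by omega),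
        hnode 1 _ (by omega)]
    rw [if_neg h2]
    by_cases h3 : (k : ℕ) + 1 = g / 2 + 1
    · rw [if_pos h3, if_neg (by omega), if_neg (by omega), hnode0 _ (by omega),
        hnode1 _ (by omega), one_pow, one_mul]
    rw [if_neg h3, if_neg (by omega), if_neg (by omega),
      hnode (2 * (k + 1) - g - 3) _ (by omega), hnode (2 * (k + 1) - g - 2) _ (by omega),
      one_pow, one_mul]
  · rw [if_neg hpar]
    by_cases h1 : (k : ℕ) + 1 ≤ (g - 1) / 2
    · rw [if_pos h1, if_pos (by omega), if_pos (by omega), hnode (g - 2 * (k + 1)) _ (by omega),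
        hnode (g - 2 * (k + 1) + 1) _ (by omega)]
    rw [if_neg h1]
    by_cases h2 : (k : ℕ) + 1 = (g + 1) / 2
    · rw [if_pos h2, if_pos (by omega), if_pos (by omega), hnode0 _ (by omega),
        hnode1 _ (by omega)]
    rw [if_neg h2]
    by_cases h3 : (k : ℕ) + 1 = (g + 3) / 2
    · rw [if_pos h3, if_neg (by omega), if_neg (by omega), hnode1 _ (by omega),
        hnode 1 _ (by omega), one_pow, one_mul]
    rw [if_neg h3, if_neg (by omega), if_neg (by omega),
      hnode (2 * (k + 1) - g - 3) _ (by omega), hnode (2 * (k + 1) - g - 2) _ (by omega),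
      one_pow, one_mul]

/-- The intervals between consecutive nodes are disjoint. -/
lemma index_eq_of_mem_Ioo {g : ℕ} {a : ℕ → ℝ} (hu : StrictMonoOn (node a) (Set.Iio (g + 1)))
    {m n : ℕ} (hm : m < g) (hn : n < g) {z : ℝ} (hz : z ∈ Set.Ioo (node a m) (node a (m + 1)))
    (hz' : z ∈ Set.Ioo (node a n) (node a (n + 1))) : m = n := by
  have h1 := (hu.lt_iff_lt (by simp; omega) (by simpa using hn)).1 (hz.1.trans hz'.2)
  have h2 := (hu.lt_iff_lt (by simp; omega) (by simpa using hm)).1 (hz'.1.trans hz.2)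
  omega

/-! ### Invertibility of the period matrix -/

/-- For `g ≥ 2` and `1 = a 0 < a 1 < ⋯ < a (g-1)`, the matrix `Π₀` of hyperelliptic
integrals of the curve `w² = z ∏ (z² - a i ²)` is invertible. -/
theorem stmt_6 (g : ℕ) (hg : 2 ≤ g) (a : ℕ → ℝ) (ha0 : a 0 = 1)
    (hmono : StrictMonoOn a (Set.Iio g)) :
    IsUnit (PiZero g a).det := by
  have hu := node_strictMonoOn ha0 hmono
  rw [isUnit_iff_ne_zero]
  intro hdet
  obtain ⟨v, hv0, hv⟩ := Matrix.exists_vecMul_eq_zero_iff.2 hdet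
  refine hv0 ?_
  have hroot : ∀ k : Fin g,
      ∃ z ∈ Set.Ioo (node a (intervalIndex g k)) (node a (intervalIndex g k + 1)),
        ∑ i : Fin g, v i * (colSign g k * z) ^ (i : ℕ) = 0 := by
    intro k
    have hm := intervalIndex_lt k.2
    refine exists_root_of_integral_eq_zero hu hm (by fun_prop) ?_
    have hlt : node a (intervalIndex g k) < node a (intervalIndex g k + 1) :=
      hu (by simp; omega) (by simpa using hm) (by omega)
    have hw := intervalIntegrable_weight hu (node_nonneg hu (by omega)) hlt.le
    have hk := congrFun hv k
    simp only [Matrix.vecMul, dotProduct, Pi.zero_apply, PiZero_apply hg ha0] at hk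
    rw [← hk]
    simp only [Finset.sum_mul, mul_assoc]
    rw [intervalIntegral.integral_finsetSum]
    · simp only [intervalIntegral.integral_const_mul]
    · intro i _
      refine IntervalIntegrable.const_mul (hw.continuousOn_mul ?_) _
      fun_prop
  choose z hz hz0 using hroot
  refine Matrix.eq_zero_of_forall_index_sum_mul_pow_eq_zero
    (f := fun k : Fin g => colSign g k * z k) ?_ hz0
  intro k l hkl
  have habs : ∀ k : Fin g, |colSign g k * z k| = z k := fun k => by
    rw [abs_mul, abs_colSign, one_mul, abs_of_pos]
    have := intervalIndex_lt k.2
    exact (node_nonneg hu (by omega)).trans_lt (hz k).1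
  have hzkl : z k = z l := by rw [← habs k, ← habs l]; exact congrArg _ hkl
  exact Fin.ext (intervalIndex_injective (index_eq_of_mem_Ioo hu (intervalIndex_lt k.2)
    (intervalIndex_lt l.2) (hz k) (hzkl ▸ hz l)))
end

section
/- Let g ≥ 2 and 1 < a₁ < ⋯ < a_{g−1}, let f(z) = z(z²−1)(z²−a₁²)⋯(z²−a_{g−1}²), and let Π₀ = [I_{j,k}] be the g×g real matrix of hyperelliptic integrals defined (according to the parity of g) as in the construction of the period matrix. Let M = diag((−1)^{j−1})_{j=1}^{g} and let N be the g×g matrix with N_{j,k} = (−1)^{g+1−j−k} if j + k ≤ g + 1 and 0 otherwise. Then the real matrix Π₀⁻¹·M·Π₀·N is symmetric. -/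
/-!
The statement is Riemann's bilinear relation for the real periods of `w² = f(z)`, in a form that
can be proved on the upper half-plane alone.

Order the roots of `f` as `e 0 < ⋯ < e (2g)`.  Then `(Π₀)_{p,l}` is the integral of
`x ^ p / √|f|` over the "band" `[e (2l), e (2l+1)]`, and since `f` is odd, `M Π₀` consists, up to
reversing the columns, of the integrals over the "gaps" `[e (2k+1), e (2k+2)]`.  For invertible
`Π₀`, the symmetry of `Π₀⁻¹ M Π₀ N` amounts to that of `M Π₀ N Π₀ᵀ`, that is, to
`∑_{l ≤ k} (-1)^(k-l) gap_k(p) band_l(q)` being symmetric in `p, q` (`bilinear`).  For singular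
`Π₀` there is nothing to prove because `Π₀⁻¹ = 0` by convention.

Let `F p z = z ^ p / √(f z)` (`hyp`), holomorphic for `Im z > 0` and `O(|z| ^ (-3/2))` at infinity
for `p < g`.  On the real line its boundary value is real on the bands and purely imaginary on the
gaps, with alternating signs, so the sum above is, up to a global sign,
`∫ Im F_p(x) ∫_{y ≤ x} Re F_q(y) dy dx` (`im_mul_primitive`).  Cauchy's theorem gives
`∫ F_p = 0` and `∫ F_p(x) F_q(x - s) dx = 0` on every horizontal line; integrating the latter over
`s ≥ 0` and moving the line down to the real axis by dominated convergence yields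
`∫ F_p(x) ∫_{y ≤ x} F_q(y) dy dx = 0` (`HardyL1.pair_eq_zero`).  The imaginary part of this
identity, combined with an integration by parts, is the desired symmetry (`HardyL1.re_im_symm`).
-/

open MeasureTheory intervalIntegral Matrix

/-! ### Functions of Hardy type on the upper half-plane -/

/-- A Hardy-type condition on the closed upper half-plane: `F` is holomorphic in the open
half-plane, `F z = o(1/|z|)` at infinity, the restrictions of `F` to the lines `Im z = δ`,
`0 ≤ δ ≤ 1`, share an integrable majorant, and `F` on the real axis is almost everywhere its
vertical boundary value. -/
structure HardyL1 (F : ℂ → ℂ) : Prop where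
  diff : ∀ z : ℂ, 0 < z.im → DifferentiableAt ℂ F z
  meas : Measurable F
  decay : Filter.Tendsto (fun z => z * F z) (Bornology.cobounded ℂ ⊓ Filter.principal {z | 0 < z.im})
    (nhds 0)
  dom : ∃ G : ℝ → ℝ, Integrable G ∧
    ∀ᵐ x : ℝ, ∀ δ : ℝ, 0 ≤ δ → δ ≤ 1 → ‖F (x + δ * Complex.I)‖ ≤ G x
  lim : ∀ᵐ x : ℝ, Filter.Tendsto (fun δ : ℝ => F (x + δ * Complex.I)) (nhdsWithin 0 (Set.Ioi 0))
    (nhds (F x))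

/-- A function holomorphic in the upper half-plane and `o(1/|z|)` at infinity has vanishing
integral over horizontal lines: apply Cauchy's theorem to `[-R, R] × [δ, R]`. -/
theorem line_integral_eq_zero (h : ℂ → ℂ) (hd : ∀ z : ℂ, 0 < z.im → DifferentiableAt ℂ h z)
    (hdecay : Filter.Tendsto (fun z => z * h z)
      (Bornology.cobounded ℂ ⊓ Filter.principal {z | 0 < z.im}) (nhds 0))
    (δ : ℝ) (hδ : 0 < δ) (hint : Integrable (fun x : ℝ => h (x + δ * Complex.I))) :
    ∫ x : ℝ, h (x + δ * Complex.I) = 0 := by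
  have h1 := intervalIntegral_tendsto_integral hint Filter.tendsto_neg_atTop_atBot
    Filter.tendsto_id
  refine tendsto_nhds_unique h1 ?_
  rw [Metric.tendsto_atTop]
  intro ε hε
  rw [Metric.tendsto_nhds] at hdecay
  have h2 := hdecay (ε / 8) (by positivity)
  rw [Filter.eventually_inf_principal, (Filter.hasBasis_cobounded_norm).eventually_iff] at h2
  obtain ⟨R0, -, hR0⟩ := h2
  refine ⟨max (max R0 δ) 1, fun R hR => ?_⟩
  have hRδ : δ ≤ R := le_trans (le_trans (le_max_right _ _) (le_max_left _ _)) hR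
  have hRR : R0 ≤ R := le_trans (le_trans (le_max_left _ _) (le_max_left _ _)) hR
  have hR1 : 1 ≤ R := le_trans (le_max_right _ _) hR
  have hRpos : 0 < R := by linarith
  -- on the three far sides of the rectangle `|h| ≤ (ε / 8) / R`
  have key : ∀ z : ℂ, 0 < z.im → R ≤ ‖z‖ → ‖h z‖ ≤ ε / 8 / R := by
    intro z hz hzR
    have := hR0 (x := z) (by simpa using hRR.trans hzR) hz
    rw [dist_zero_right, norm_mul] at this
    rw [le_div_iff₀ hRpos]
    nlinarith [norm_nonneg (h z)]
  have hrect := Complex.integral_boundary_rect_eq_zero_of_differentiableOn h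
    (-R + δ * Complex.I) (R + R * Complex.I) (by
      intro z hz
      apply (hd z _).differentiableWithinAt
      have := hz.2
      simp [Set.uIcc_of_le hRδ] at this
      linarith [this.1])
  simp only [Complex.add_re, Complex.neg_re, Complex.ofReal_re, Complex.mul_re, Complex.I_re,
    mul_zero, Complex.ofReal_im, Complex.I_im, mul_one, sub_self, add_zero, Complex.add_im,
    Complex.neg_im, neg_zero, Complex.mul_im, zero_add] at hrect
  have b1 : ‖∫ x : ℝ in (-R)..R, h (x + R * Complex.I)‖ ≤ ε / 8 / R * |R - (-R)| := by
    apply intervalIntegral.norm_integral_le_of_norm_le_const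
    intro x _
    apply key
    · simpa using hRpos
    · refine le_trans ?_ (Complex.abs_im_le_norm _)
      simp [abs_of_pos hRpos]
  have b2 : ∀ s : ℝ, |s| = R →
      ‖∫ y : ℝ in δ..R, h ((s : ℝ) + y * Complex.I)‖ ≤ ε / 8 / R * |R - δ| := by
    intro s hs
    apply intervalIntegral.norm_integral_le_of_norm_le_const
    intro y hy
    rw [Set.uIoc_of_le hRδ] at hy
    apply key
    · simpa using hδ.trans hy.1
    · refine le_trans ?_ (Complex.abs_re_le_norm _)
      simp [hs]
  have b3 := b2 R (abs_of_pos hRpos)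
  have b4 := b2 (-R) (by rw [abs_neg, abs_of_pos hRpos])
  rw [dist_zero_right]
  have e1 : (∫ x : ℝ in (-R)..R, h (x + δ * Complex.I)) =
      (∫ x : ℝ in (-R)..R, h (x + R * Complex.I))
      - Complex.I • (∫ y : ℝ in δ..R, h ((R : ℝ) + y * Complex.I))
      + Complex.I • (∫ y : ℝ in δ..R, h (((-R : ℝ) : ℂ) + y * Complex.I)) := by
    linear_combination hrect
  simp only [id]
  rw [e1]
  have hR2 : |R - (-R)| = 2 * R := by rw [abs_of_pos] <;> linarith
  have hR3 : |R - δ| ≤ R := by rw [abs_of_nonneg] <;> linarith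
  have hc : 0 ≤ ε / 8 / R := by positivity
  have hc2 : ε / 8 / R * R = ε / 8 := by field_simp
  calc _ ≤ _ := norm_add_le _ _
    _ ≤ _ := add_le_add_left (norm_sub_le _ _) _
    _ ≤ ε / 8 / R * |R - (-R)| + ε / 8 / R * |R - δ| + ε / 8 / R * |R - δ| := by
      simp only [norm_smul, Complex.norm_I, one_mul]
      gcongr
    _ ≤ ε / 8 / R * (2 * R) + ε / 8 / R * R + ε / 8 / R * R := by rw [hR2]; gcongr
    _ = ε / 2 := by linear_combination 4 * hc2
    _ < ε := by linarith

namespace HardyL1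
variable {F F₁ F₂ : ℂ → ℂ}

theorem line_meas (h : HardyL1 F) (δ : ℝ) : Measurable fun x : ℝ => F (x + δ * Complex.I) :=
  h.meas.comp (by fun_prop)

theorem integrable_line (h : HardyL1 F) {δ : ℝ} (h0 : 0 ≤ δ) (h1 : δ ≤ 1) :
    Integrable fun x : ℝ => F (x + δ * Complex.I) := by
  obtain ⟨G, hG, hb⟩ := h.dom
  exact hG.mono' (h.line_meas δ).aestronglyMeasurable (hb.mono fun x hx => hx δ h0 h1)

theorem integrable (h : HardyL1 F) : Integrable fun x : ℝ => F x := by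
  simpa using h.integrable_line le_rfl zero_le_one

theorem small : ∀ᶠ δ : ℝ in nhdsWithin 0 (Set.Ioi 0), 0 < δ ∧ δ ≤ 1 :=
  Filter.Eventually.and self_mem_nhdsWithin
    (mem_nhdsWithin_of_mem_nhds (Iic_mem_nhds one_pos))

/-- The integral over the real axis vanishes, as a limit of integrals over higher lines. -/
theorem integral_eq_zero (h : HardyL1 F) : ∫ x : ℝ, F x = 0 := by
  obtain ⟨G, hG, hb⟩ := h.dom
  have : Filter.Tendsto (fun δ : ℝ => ∫ x : ℝ, F (x + δ * Complex.I))
      (nhdsWithin 0 (Set.Ioi 0)) (nhds (∫ x : ℝ, F x)) :=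
    tendsto_integral_filter_of_dominated_convergence G
      (Filter.Eventually.of_forall fun δ => (h.line_meas δ).aestronglyMeasurable)
      (small.mono fun δ hδ => hb.mono fun x hx => hx δ hδ.1.le hδ.2) hG h.lim
  refine tendsto_nhds_unique this (tendsto_const_nhds.congr' ?_)
  filter_upwards [small] with δ hδ
  exact (line_integral_eq_zero F h.diff h.decay δ hδ.1 (h.integrable_line hδ.1.le hδ.2)).symm

theorem tendsto_shift (s : ℝ) : Filter.Tendsto (fun z : ℂ => z - s)
    (Bornology.cobounded ℂ ⊓ Filter.principal {z | 0 < z.im})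
    (Bornology.cobounded ℂ ⊓ Filter.principal {z | 0 < z.im}) := by
  refine Filter.tendsto_inf.2 ⟨?_, ?_⟩
  · refine Filter.Tendsto.mono_left ?_ inf_le_left
    rw [← tendsto_norm_atTop_iff_cobounded]
    refine Filter.tendsto_atTop_mono (f := fun z : ℂ => ‖z‖ + -‖(s : ℂ)‖) ?_ ?_
    · intro z; have := norm_sub_norm_le z (s : ℂ); linarith
    · exact Filter.tendsto_atTop_add_const_right _ _ tendsto_norm_cobounded_atTop
  · rw [Filter.tendsto_principal]
    refine Filter.Eventually.filter_mono inf_le_right ?_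
    rw [Filter.eventually_principal]
    intro z hz
    simpa using hz

theorem tendsto_zero (h : HardyL1 F) : Filter.Tendsto F
    (Bornology.cobounded ℂ ⊓ Filter.principal {z | 0 < z.im}) (nhds 0) := by
  have h1 : Filter.Tendsto (fun z : ℂ => z⁻¹)
    (Bornology.cobounded ℂ ⊓ Filter.principal {z | 0 < z.im}) (nhds 0) :=
    Filter.tendsto_inv₀_cobounded.mono_left inf_le_left
  have := h1.mul h.decay
  rw [zero_mul] at this
  refine this.congr' ?_
  refine Filter.Eventually.filter_mono inf_le_right ?_
  rw [Filter.eventually_principal]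
  intro z hz
  have : z ≠ 0 := by rintro rfl; simp at hz
  field_simp

/-- With `y = x - s`, the double integral is one over `s ≥ 0` of `∫ F₂(x) F₁(x - s) dx`, and each
of these inner integrals vanishes because `F₂(z) F₁(z - s)` is again holomorphic and decays. -/
theorem pair_line (h₁ : HardyL1 F₁) (h₂ : HardyL1 F₂) {δ : ℝ} (h0 : 0 < δ) (h1 : δ ≤ 1) :
    ∫ x : ℝ, F₂ (x + δ * Complex.I) * ∫ y in Set.Iic x, F₁ (y + δ * Complex.I) = 0 := by
  have i1 := h₁.integrable_line h0.le h1
  have i2 := h₂.integrable_line h0.le h1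
  have hprod : Integrable (fun p : ℝ × ℝ => F₂ (p.1 + δ * Complex.I) *
      F₁ ((p.1 - p.2 : ℝ) + δ * Complex.I)) (volume.prod volume) := by
    have := ((i2.mul_prod i1))
    have mp : MeasurePreserving (fun p : ℝ × ℝ => (p.1, p.1 - p.2))
        (volume.prod volume) (volume.prod volume) :=
      MeasurePreserving.skew_product (g := fun x y => x - y) (MeasurePreserving.id _) (by fun_prop)
        (Filter.Eventually.of_forall fun x => (Measure.measurePreserving_sub_left volume x).map_eq)
    exact mp.integrable_comp_of_integrable this
  have hS : MeasurableSet {p : ℝ × ℝ | 0 ≤ p.2} := measurableSet_le measurable_const measurable_snd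
  have hprod2 := hprod.indicator hS
  have e1 : ∀ x : ℝ, F₂ (x + δ * Complex.I) * ∫ y in Set.Iic x, F₁ (y + δ * Complex.I) =
      ∫ s : ℝ, {p : ℝ × ℝ | 0 ≤ p.2}.indicator (fun p : ℝ × ℝ => F₂ (p.1 + δ * Complex.I) *
      F₁ ((p.1 - p.2 : ℝ) + δ * Complex.I)) (x, s) := by
    intro x
    rw [← MeasureTheory.integral_indicator measurableSet_Iic, ← integral_sub_left_eq_self _ volume x,
      ← MeasureTheory.integral_const_mul]
    congr 1
    ext s
    by_cases hs : 0 ≤ s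
    · simp [Set.indicator, hs]
    · simp [Set.indicator, hs]
  simp_rw [e1]
  rw [integral_integral_swap (by exact hprod2)]
  have e2 : ∀ s : ℝ, ∫ x : ℝ, {p : ℝ × ℝ | 0 ≤ p.2}.indicator
      (fun p : ℝ × ℝ => F₂ (p.1 + δ * Complex.I) *
      F₁ ((p.1 - p.2 : ℝ) + δ * Complex.I)) (x, s) = 0 ∨ ¬ Integrable (fun x : ℝ =>
      {p : ℝ × ℝ | 0 ≤ p.2}.indicator (fun p : ℝ × ℝ => F₂ (p.1 + δ * Complex.I) *
      F₁ ((p.1 - p.2 : ℝ) + δ * Complex.I)) (x, s)) := by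
    intro s
    rw [or_iff_not_imp_right, not_not]
    by_cases hs : 0 ≤ s
    · simp only [Set.indicator, Set.mem_ofPred_eq, hs, if_true]
      intro hi
      have hcongr : ∀ x : ℝ, ((x - s : ℝ) : ℂ) + δ * Complex.I = (x + δ * Complex.I) - s := by
        intro x; push_cast; ring
      simp_rw [hcongr] at hi ⊢
      refine line_integral_eq_zero (fun z => F₂ z * F₁ (z - s)) ?_ ?_ δ h0 hi
      · intro z hz
        refine (h₂.diff z hz).mul ?_
        exact (h₁.diff (z - s) (by simpa using hz)).comp z (by fun_prop)
      · have := h₂.decay.mul (h₁.tendsto_zero.comp (tendsto_shift s))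
        rw [zero_mul] at this
        exact this.congr fun z => by simp [mul_assoc]
    · simp [Set.indicator, hs]
  calc _ = ∫ s : ℝ, (0 : ℂ) := by
        apply MeasureTheory.integral_congr_ae
        filter_upwards [hprod2.prod_left_ae] with s hs
        exact (e2 s).resolve_right (not_not.2 hs)
    _ = 0 := by simp

/-- The limit `δ → 0` of `pair_line`. -/
theorem pair_eq_zero (h₁ : HardyL1 F₁) (h₂ : HardyL1 F₂) :
    ∫ x : ℝ, F₂ x * ∫ y in Set.Iic x, F₁ y = 0 := by
  obtain ⟨G₁, hG₁, hb₁⟩ := h₁.dom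
  obtain ⟨G₂, hG₂, hb₂⟩ := h₂.dom
  have inner : ∀ x : ℝ, Filter.Tendsto
      (fun δ : ℝ => ∫ y in Set.Iic x, F₁ (y + δ * Complex.I))
      (nhdsWithin 0 (Set.Ioi 0)) (nhds (∫ y in Set.Iic x, F₁ y)) := fun x =>
    tendsto_integral_filter_of_dominated_convergence G₁
      (Filter.Eventually.of_forall fun δ => (h₁.line_meas δ).aestronglyMeasurable)
      (small.mono fun δ hδ => ae_restrict_of_ae (hb₁.mono fun x hx => hx δ hδ.1.le hδ.2))
      hG₁.integrableOn (ae_restrict_of_ae h₁.lim)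
  have hbd : ∀ δ : ℝ, 0 < δ → δ ≤ 1 → ∀ x : ℝ,
      ‖∫ y in Set.Iic x, F₁ (y + δ * Complex.I)‖ ≤ ∫ y, ‖G₁ y‖ := by
    intro δ h0 h1 x
    calc _ ≤ ∫ y in Set.Iic x, ‖G₁ y‖ := by
          apply MeasureTheory.norm_integral_le_of_norm_le hG₁.norm.integrableOn
          exact ae_restrict_of_ae (hb₁.mono fun y hy => (hy δ h0.le h1).trans (le_abs_self _))
      _ ≤ _ := setIntegral_le_integral hG₁.norm (Filter.Eventually.of_forall fun y => norm_nonneg _)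
  have hcont : ∀ δ : ℝ, 0 < δ → δ ≤ 1 →
      Continuous fun x : ℝ => ∫ y in Set.Iic x, F₁ (y + δ * Complex.I) := by
    intro δ h0 h1
    have hi := h₁.integrable_line h0.le h1
    have : (fun x : ℝ => ∫ y in Set.Iic x, F₁ (y + δ * Complex.I)) = fun x : ℝ =>
        (∫ y in Set.Iic (0 : ℝ), F₁ (y + δ * Complex.I)) + ∫ y in (0 : ℝ)..x, F₁ (y + δ * Complex.I) := by
      ext x
      rw [← intervalIntegral.integral_Iic_sub_Iic hi.integrableOn hi.integrableOn]
      ring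
    rw [this]
    exact continuous_const.add (intervalIntegral.continuous_primitive
      (fun a b => hi.intervalIntegrable) 0)
  have : Filter.Tendsto (fun δ : ℝ => ∫ x : ℝ, F₂ (x + δ * Complex.I) *
        ∫ y in Set.Iic x, F₁ (y + δ * Complex.I))
      (nhdsWithin 0 (Set.Ioi 0)) (nhds (∫ x : ℝ, F₂ x * ∫ y in Set.Iic x, F₁ y)) := by
    refine tendsto_integral_filter_of_dominated_convergence (fun x => G₂ x * ∫ y, ‖G₁ y‖)
      ?_ ?_ (hG₂.mul_const _) ?_
    · filter_upwards [small] with δ hδ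
      exact (h₂.line_meas δ).aestronglyMeasurable.mul (hcont δ hδ.1 hδ.2).aestronglyMeasurable
    · filter_upwards [small] with δ hδ
      filter_upwards [hb₂] with x hx
      rw [norm_mul]
      exact mul_le_mul (hx δ hδ.1.le hδ.2) (hbd δ hδ.1 hδ.2 x) (norm_nonneg _)
        ((norm_nonneg _).trans (hx δ hδ.1.le hδ.2))
    · filter_upwards [h₂.lim] with x hx
      exact hx.mul (inner x)
  refine tendsto_nhds_unique this (tendsto_const_nhds.congr' ?_)
  filter_upwards [small] with δ hδ
  exact (pair_line h₁ h₂ hδ.1 hδ.2).symm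

end HardyL1

theorem integrable_mul_Iic {u v : ℝ → ℝ} (hu : Integrable u) (hv : Integrable v) :
    Integrable fun y => v y * ∫ x in Set.Iic y, u x := by
  have hS : MeasurableSet {p : ℝ × ℝ | p.2 ≤ p.1} := measurableSet_le measurable_snd measurable_fst
  have := ((hv.mul_prod hu).indicator hS).integral_prod_left
  refine this.congr (Filter.Eventually.of_forall fun x => ?_)
  simp only
  rw [← MeasureTheory.integral_indicator measurableSet_Iic,
    ← MeasureTheory.integral_const_mul]
  congr 1
  ext y
  by_cases hy : y ≤ x <;> simp [Set.indicator, hy]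

/-- Integration by parts for `L¹` functions, proved by Fubini; the boundary term is
`(∫ u) * ∫ v`. -/
theorem integral_by_parts_Iic {u v : ℝ → ℝ} (hu : Integrable u) (hv : Integrable v)
    (hv0 : ∫ x, v x = 0) :
    ∫ x, u x * ∫ y in Set.Iic x, v y = -∫ x, v x * ∫ y in Set.Iic x, u y := by
  have hS : MeasurableSet {p : ℝ × ℝ | p.2 ≤ p.1} := measurableSet_le measurable_snd measurable_fst
  have hprod := (hu.mul_prod hv).indicator hS
  have e1 : ∀ x, u x * ∫ y in Set.Iic x, v y =
      ∫ y, {p : ℝ × ℝ | p.2 ≤ p.1}.indicator (fun p => u p.1 * v p.2) (x, y) := by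
    intro x
    rw [← MeasureTheory.integral_indicator measurableSet_Iic,
      ← MeasureTheory.integral_const_mul]
    congr 1
    ext y
    by_cases hy : y ≤ x <;> simp [Set.indicator, hy]
  simp_rw [e1]
  rw [integral_integral_swap (by exact hprod), ← MeasureTheory.integral_neg]
  have e2 : ∀ y, ∫ x, {p : ℝ × ℝ | p.2 ≤ p.1}.indicator (fun p => u p.1 * v p.2) (x, y) =
      (∫ x, u x) * v y - v y * ∫ x in Set.Iic y, u x := by
    intro y
    have : ∫ x, {p : ℝ × ℝ | p.2 ≤ p.1}.indicator (fun p => u p.1 * v p.2) (x, y) =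
        v y * ∫ x in Set.Ici y, u x := by
      rw [← MeasureTheory.integral_indicator measurableSet_Ici,
        ← MeasureTheory.integral_const_mul]
      congr 1
      ext x
      by_cases hy : y ≤ x <;> simp [Set.indicator, hy, mul_comm]
    rw [this, integral_Ici_eq_integral_Ioi, ← integral_Iic_add_Ioi hu.integrableOn hu.integrableOn]
    ring
  simp_rw [e2]
  have hb : Integrable fun y => v y * ∫ x in Set.Iic y, u x :=
    integrable_mul_Iic hu hv
  rw [MeasureTheory.integral_sub (hv.const_mul _) hb, MeasureTheory.integral_const_mul, hv0,
    MeasureTheory.integral_neg]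
  ring

/-- The imaginary part of `pair_eq_zero`, after turning `∫ Re F₂ ∫ Im F₁` into
`-∫ Im F₁ ∫ Re F₂`, which is legitimate because `∫ Im F₁ = 0`. -/
theorem HardyL1.re_im_symm {F₁ F₂ : ℂ → ℂ} (h₁ : HardyL1 F₁) (h₂ : HardyL1 F₂) :
    ∫ x : ℝ, (F₂ x).im * ∫ y : ℝ in Set.Iic x, (F₁ y).re =
      ∫ x : ℝ, (F₁ x).im * ∫ y : ℝ in Set.Iic x, (F₂ y).re := by
  have i1 := h₁.integrable
  have i2 := h₂.integrable
  have r1 : Integrable fun x : ℝ => (F₁ x).re := i1.re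
  have m1 : Integrable fun x : ℝ => (F₁ x).im := i1.im
  have r2 : Integrable fun x : ℝ => (F₂ x).re := i2.re
  have m2 : Integrable fun x : ℝ => (F₂ x).im := i2.im
  have t1 : ∫ x : ℝ, (F₁ x).im = 0 := by
    have := integral_im i1
    rw [h₁.integral_eq_zero] at this
    simpa using this
  have key := congrArg Complex.im (pair_eq_zero h₁ h₂)
  have hre : ∀ x : ℝ, (∫ y : ℝ in Set.Iic x, F₁ y).re = ∫ y : ℝ in Set.Iic x, (F₁ y).re :=
    fun x => (integral_re i1.integrableOn).symm
  have him : ∀ x : ℝ, (∫ y : ℝ in Set.Iic x, F₁ y).im = ∫ y : ℝ in Set.Iic x, (F₁ y).im :=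
    fun x => (integral_im i1.integrableOn).symm
  have hint : Integrable fun x : ℝ => F₂ x * ∫ y : ℝ in Set.Iic x, F₁ y := by
    have : Integrable fun x : ℝ =>
        (((F₂ x).re * ∫ y : ℝ in Set.Iic x, (F₁ y).re) -
          ((F₂ x).im * ∫ y : ℝ in Set.Iic x, (F₁ y).im) : ℝ) :=
      (integrable_mul_Iic r1 r2).sub (integrable_mul_Iic m1 m2)
    have h' : Integrable fun x : ℝ =>
        (((F₂ x).re * ∫ y : ℝ in Set.Iic x, (F₁ y).im) +
          ((F₂ x).im * ∫ y : ℝ in Set.Iic x, (F₁ y).re) : ℝ) :=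
      (integrable_mul_Iic m1 r2).add (integrable_mul_Iic r1 m2)
    refine ((this.ofReal (𝕜 := ℂ)).add ((h'.ofReal (𝕜 := ℂ)).mul_const Complex.I)).congr
      (Filter.Eventually.of_forall fun x => ?_)
    apply Complex.ext <;> simp [hre, him]
  have e : (∫ x : ℝ, F₂ x * ∫ y : ℝ in Set.Iic x, F₁ y).im =
      ∫ x : ℝ, (F₂ x * ∫ y : ℝ in Set.Iic x, F₁ y).im := (integral_im hint).symm
  rw [e] at key
  simp only [Complex.mul_im, hre, him, Complex.zero_im] at key
  rw [MeasureTheory.integral_add (integrable_mul_Iic m1 r2) (integrable_mul_Iic r1 m2),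
    integral_by_parts_Iic r2 m1 t1] at key
  linarith

/-! ### The hyperelliptic integrands -/

/-- `z ^ p / √∏_{m<n} (z - e m)`, as a product of principal branches of `(z - e m) ^ (-1/2)`.
It is holomorphic in the upper half-plane, and since `arg = π` on the negative axis, its values on
the real axis are the limits from above; at a root `e m` the value is `0`. -/
noncomputable def hyp (n : ℕ) (e : ℕ → ℝ) (p : ℕ) (z : ℂ) : ℂ :=
  z ^ p * ∏ m ∈ Finset.range n, (z - e m) ^ (((-1 / 2 : ℝ)) : ℂ)

/-- `x ^ p / √|∏_{m<n} (x - e m)|`, with value `0` at the roots. -/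
noncomputable def wt (n : ℕ) (e : ℕ → ℝ) (p : ℕ) (x : ℝ) : ℝ :=
  x ^ p / Real.sqrt |∏ m ∈ Finset.range n, (x - e m)|

theorem norm_hyp (n : ℕ) (e : ℕ → ℝ) (p : ℕ) (z : ℂ) :
    ‖hyp n e p z‖ = ‖z‖ ^ p * ∏ m ∈ Finset.range n, ‖z - e m‖ ^ (-1 / 2 : ℝ) := by
  simp only [hyp, norm_mul, norm_pow, norm_prod, Complex.norm_cpow_real]

theorem integrable_ker :
    Integrable fun x : ℝ => |x| ^ (-1 / 2 : ℝ) * (1 + |x|)⁻¹ := by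
  suffices h : IntegrableOn (fun x : ℝ => x ^ (-1 / 2 : ℝ) * (1 + x)⁻¹) (Set.Ioi 0) by
    have hpos : IntegrableOn (fun x : ℝ => |x| ^ (-1 / 2 : ℝ) * (1 + |x|)⁻¹) (Set.Ioi 0) :=
      h.congr_fun (fun x hx => by simp only [abs_of_pos (Set.mem_Ioi.1 hx)]) measurableSet_Ioi
    rw [← integrableOn_univ, ← Set.Iic_union_Ioi (a := (0 : ℝ)), integrableOn_union]
    refine ⟨?_, hpos⟩
    rw [← Measure.map_neg_eq_self (volume : Measure ℝ)]
    let m : MeasurableEmbedding fun x : ℝ => -x := (Homeomorph.neg ℝ).measurableEmbedding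
    rw [m.integrableOn_map_iff]
    simp_rw [Function.comp_def, abs_neg, Set.neg_preimage, Set.neg_Iic, neg_zero]
    exact Iff.mpr integrableOn_Ici_iff_integrableOn_Ioi hpos
  have hm : Measurable fun x : ℝ => x ^ (-1 / 2 : ℝ) * (1 + x)⁻¹ := by fun_prop
  rw [← Set.Ioc_union_Ioi_eq_Ioi zero_le_one, integrableOn_union]
  constructor
  · have : IntegrableOn (fun x : ℝ => x ^ (-1 / 2 : ℝ)) (Set.Ioc 0 1) := by
      rw [← intervalIntegrable_iff_integrableOn_Ioc_of_le zero_le_one]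
      exact intervalIntegral.intervalIntegrable_rpow' (by norm_num)
    refine Integrable.mono' this hm.aestronglyMeasurable ?_
    filter_upwards [ae_restrict_mem measurableSet_Ioc] with x hx
    have h0 : 0 < x := hx.1
    rw [Real.norm_of_nonneg (by positivity)]
    exact mul_le_of_le_one_right (by positivity) (inv_le_one_of_one_le₀ (by linarith))
  · have : IntegrableOn (fun x : ℝ => x ^ (-3 / 2 : ℝ)) (Set.Ioi 1) :=
      integrableOn_Ioi_rpow_of_lt (by norm_num) one_pos
    refine Integrable.mono' this hm.aestronglyMeasurable ?_
    filter_upwards [ae_restrict_mem measurableSet_Ioi] with x hx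
    have h0 : 0 < x := lt_trans one_pos hx
    rw [Real.norm_of_nonneg (by positivity)]
    have : x ^ (-3 / 2 : ℝ) = x ^ (-1 / 2 : ℝ) * x⁻¹ := by
      rw [← Real.rpow_neg_one x, ← Real.rpow_add h0]; norm_num
    rw [this]
    gcongr
    linarith

theorem rpow_neg_half_pow {t : ℝ} (ht : 0 ≤ t) (g : ℕ) :
    (t ^ (-1 / 2 : ℝ)) ^ (2 * g) = (t⁻¹) ^ g := by
  rw [pow_mul, ← Real.rpow_natCast (t ^ (-1 / 2 : ℝ)) 2, ← Real.rpow_mul ht]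
  norm_num [Real.rpow_neg_one]

/-- The integrable majorant: if `e m₀` is the root nearest to `x`, each of the other `2g` factors
is at most a constant times `(1 + |x - e m₀|) ^ (-1/2)`. -/
theorem dom_bound (g : ℕ) (e : ℕ → ℝ) (p : ℕ) (hp : p < g)
    (he : Set.InjOn e (Finset.range (2 * g + 1))) :
    ∃ C : ℝ, ∀ x : ℝ, (|x| + 1) ^ p *
        ∏ m ∈ Finset.range (2 * g + 1), |x - e m| ^ (-1 / 2 : ℝ) ≤
      C * ∑ m ∈ Finset.range (2 * g + 1), |x - e m| ^ (-1 / 2 : ℝ) * (1 + |x - e m|)⁻¹ := by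
  obtain ⟨d, hd0, hd1, hd⟩ : ∃ d : ℝ, 0 < d ∧ d ≤ 1 ∧ ∀ m ∈ Finset.range (2 * g + 1),
      ∀ k ∈ Finset.range (2 * g + 1), m ≠ k → d ≤ |e m - e k| := by
    have hne : (insert (1 : ℝ) (((Finset.range (2 * g + 1)).offDiag).image
      fun q => |e q.1 - e q.2|)).Nonempty := Finset.insert_nonempty _ _
    refine ⟨Finset.min' _ hne, ?_, Finset.min'_le _ _ (Finset.mem_insert_self _ _), ?_⟩
    · rw [Finset.lt_min'_iff]
      intro y hy
      rw [Finset.mem_insert, Finset.mem_image] at hy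
      rcases hy with rfl | ⟨q, hq, rfl⟩
      · exact one_pos
      · rw [Finset.mem_offDiag] at hq
        rw [abs_pos, sub_ne_zero]
        exact fun h => hq.2.2 (he hq.1 hq.2.1 h)
    · intro m hm k hk hmk
      refine Finset.min'_le _ _ (Finset.mem_insert_of_mem (Finset.mem_image.2 ⟨(m, k), ?_, rfl⟩))
      exact Finset.mem_offDiag.2 ⟨hm, hk, hmk⟩
  set E : ℝ := ∑ m ∈ Finset.range (2 * g + 1), |e m| with hE
  have hE0 : 0 ≤ E := Finset.sum_nonneg fun _ _ => abs_nonneg _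
  set C : ℝ := (E + 1) ^ p * ((d / 3)⁻¹) ^ g with hC
  have hC0 : 0 ≤ C := by positivity
  refine ⟨C, fun x => ?_⟩
  obtain ⟨m₀, hm₀, hmin⟩ := Finset.exists_min_image (Finset.range (2 * g + 1))
    (fun m => |x - e m|) ⟨0, by simp⟩
  set t := |x - e m₀| with ht
  have ht0 : 0 ≤ t := abs_nonneg _
  -- every root other than the nearest one is at distance at least `d / 3 * (1 + t)`
  have hfar : ∀ k ∈ (Finset.range (2 * g + 1)).erase m₀, d / 3 * (1 + t) ≤ |x - e k| := by
    intro k hk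
    rw [Finset.mem_erase] at hk
    have h1 : t ≤ |x - e k| := hmin k hk.2
    have h2 : d ≤ |x - e k| + t := by
      have := hd k hk.2 m₀ hm₀ hk.1
      have h3 : |e k - e m₀| ≤ |x - e k| + |x - e m₀| := by
        have := abs_sub_le (e k) x (e m₀)
        rwa [abs_sub_comm (e k) x] at this
      linarith
    rcases le_total (d / 2) t with h | h <;> nlinarith
  have hx : |x| + 1 ≤ (E + 1) * (1 + t) := by
    have h1 : |e m₀| ≤ E := Finset.single_le_sum (f := fun m => |e m|)
      (fun _ _ => abs_nonneg _) hm₀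
    have h2 : |x| ≤ t + |e m₀| := by
      have := abs_add_le (x - e m₀) (e m₀)
      simpa using this
    nlinarith
  have hcard : ((Finset.range (2 * g + 1)).erase m₀).card = 2 * g := by
    rw [Finset.card_erase_of_mem hm₀]; simp
  have hprod : ∏ k ∈ (Finset.range (2 * g + 1)).erase m₀, |x - e k| ^ (-1 / 2 : ℝ) ≤
      ((d / 3 * (1 + t))⁻¹) ^ g := by
    rw [← rpow_neg_half_pow (by positivity), ← congrArg (fun k => _ ^ k) hcard,
      ← Finset.prod_const]
    refine Finset.prod_le_prod (fun _ _ => by positivity) fun k hk => ?_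
    exact Real.rpow_le_rpow_of_nonpos (by positivity) (hfar k hk) (by norm_num)
  have h1t : 0 < 1 + t := by linarith
  calc (|x| + 1) ^ p * ∏ m ∈ Finset.range (2 * g + 1), |x - e m| ^ (-1 / 2 : ℝ)
      = (|x| + 1) ^ p * (t ^ (-1 / 2 : ℝ) *
        ∏ k ∈ (Finset.range (2 * g + 1)).erase m₀, |x - e k| ^ (-1 / 2 : ℝ)) := by
        rw [← Finset.mul_prod_erase _ _ hm₀]
    _ ≤ ((E + 1) * (1 + t)) ^ p * (t ^ (-1 / 2 : ℝ) * ((d / 3 * (1 + t))⁻¹) ^ g) := by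
        gcongr
    _ = C * (t ^ (-1 / 2 : ℝ) * ((1 + t) ^ p * ((1 + t)⁻¹) ^ g)) := by
        rw [hC, mul_pow, mul_inv, mul_pow]; ring
    _ ≤ C * (t ^ (-1 / 2 : ℝ) * (1 + t)⁻¹) := by
        gcongr
        obtain ⟨q, rfl⟩ := Nat.exists_eq_add_of_lt hp
        rw [pow_succ, pow_add, ← mul_assoc, ← mul_assoc, ← mul_pow, mul_inv_cancel₀ h1t.ne',
          one_pow, one_mul]
        refine mul_le_of_le_one_left (by positivity) (pow_le_one₀ (by positivity) ?_)
        exact inv_le_one_of_one_le₀ (by linarith)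
    _ ≤ _ := by
        gcongr
        exact Finset.single_le_sum
          (f := fun m => |x - e m| ^ (-1 / 2 : ℝ) * (1 + |x - e m|)⁻¹)
          (fun _ _ => by positivity) hm₀

theorem ae_not_root (n : ℕ) (e : ℕ → ℝ) : ∀ᵐ x : ℝ, ∀ m ∈ Finset.range n, x ≠ e m := by
  rw [Finset.eventually_all]
  intro m _
  exact Measure.ae_ne volume (e m)

theorem tendsto_cpow_boundary (c : ℂ) {y : ℝ} (hy : y ≠ 0) :
    Filter.Tendsto (fun δ : ℝ => ((y : ℂ) + δ * Complex.I) ^ c) (nhdsWithin 0 (Set.Ioi 0))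
      (nhds ((y : ℂ) ^ c)) := by
  have hc : Filter.Tendsto (fun δ : ℝ => (y : ℂ) + δ * Complex.I) (nhdsWithin 0 (Set.Ioi 0))
      (nhds (y : ℂ)) := by
    have : Continuous fun δ : ℝ => (y : ℂ) + δ * Complex.I := by fun_prop
    have := this.tendsto 0
    simp only [Complex.ofReal_zero, zero_mul, add_zero] at this
    exact this.mono_left nhdsWithin_le_nhds
  rcases lt_or_gt_of_ne hy with h | h
  · have hl := Complex.continuousWithinAt_log_of_re_neg_of_im_zero (z := (y : ℂ))
      (by simpa using h) (by simp)
    have hc' : Filter.Tendsto (fun δ : ℝ => (y : ℂ) + δ * Complex.I)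
        (nhdsWithin 0 (Set.Ioi 0)) (nhdsWithin (y : ℂ) {z : ℂ | 0 ≤ z.im}) := by
      refine tendsto_nhdsWithin_iff.2 ⟨hc, ?_⟩
      filter_upwards [self_mem_nhdsWithin] with δ hδ
      simpa using le_of_lt hδ
    have h2 := (Complex.continuous_exp.tendsto _).comp ((hl.tendsto.comp hc').mul_const c)
    rw [Complex.cpow_def_of_ne_zero (by exact_mod_cast hy)]
    refine h2.congr fun δ => ?_
    have hne : (y : ℂ) + δ * Complex.I ≠ 0 := by
      intro h0
      have := congrArg Complex.re h0
      simp at this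
      exact hy this
    simp [Complex.cpow_def_of_ne_zero hne]
  · exact ((continuousAt_cpow_const (b := c) (by simp [Complex.slitPlane, h])).tendsto).comp hc

theorem hyp_hardy (g : ℕ) (e : ℕ → ℝ) (p : ℕ) (hp : p < g)
    (he : Set.InjOn e (Finset.range (2 * g + 1))) : HardyL1 (hyp (2 * g + 1) e p) where
  diff z hz := by
    unfold hyp
    refine (by fun_prop : DifferentiableAt ℂ (fun z : ℂ => z ^ p) z).mul ?_
    apply DifferentiableAt.fun_finsetProd
    intro m _
    refine DifferentiableAt.cpow_const (by fun_prop) ?_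
    right
    simpa using hz.ne'
  meas := by
    unfold hyp
    refine (by fun_prop : Measurable (fun z : ℂ => z ^ p)).mul ?_
    apply Finset.measurable_fun_prod
    intro m _
    exact (measurable_id.sub_const _).pow_const _
  decay := by
    refine Filter.Tendsto.mono_left ?_ inf_le_left
    set E : ℝ := ∑ m ∈ Finset.range (2 * g + 1), |e m| with hE
    have hE0 : 0 ≤ E := Finset.sum_nonneg fun _ _ => abs_nonneg _
    have hlim : Filter.Tendsto (fun z : ℂ => (2 : ℝ) ^ g * (‖z‖ / 2) ^ (-(1 / 2) : ℝ))
        (Bornology.cobounded ℂ) (nhds 0) := by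
      have h1 := (tendsto_rpow_neg_atTop (y := 1 / 2) (by norm_num)).comp
        ((tendsto_norm_cobounded_atTop (E := ℂ)).atTop_div_const (r := 2) (by norm_num))
      simpa using h1.const_mul ((2 : ℝ) ^ g)
    refine squeeze_zero_norm' ?_ hlim
    have hbig : ∀ᶠ z : ℂ in Bornology.cobounded ℂ, 2 * E + 1 ≤ ‖z‖ :=
      tendsto_norm_cobounded_atTop.eventually_ge_atTop _
    filter_upwards [hbig] with z hz
    have hz1 : 1 ≤ ‖z‖ := by linarith
    have hz0 : 0 < ‖z‖ := by linarith
    rw [norm_mul, norm_hyp, ← mul_assoc, ← pow_succ']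
    have hfac : ∀ m ∈ Finset.range (2 * g + 1),
        ‖z - e m‖ ^ (-1 / 2 : ℝ) ≤ (‖z‖ / 2) ^ (-1 / 2 : ℝ) := by
      intro m hm
      refine Real.rpow_le_rpow_of_nonpos (by positivity) ?_ (by norm_num)
      have h1 : |e m| ≤ E := Finset.single_le_sum (f := fun m => |e m|)
        (fun _ _ => abs_nonneg _) hm
      have h2 := norm_sub_norm_le z (e m : ℂ)
      rw [Complex.norm_real, Real.norm_eq_abs] at h2
      linarith
    calc _ ≤ ‖z‖ ^ g * ∏ m ∈ Finset.range (2 * g + 1), (‖z‖ / 2) ^ (-1 / 2 : ℝ) := by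
          refine mul_le_mul (pow_le_pow_right₀ hz1 hp) (Finset.prod_le_prod (fun _ _ => ?_) hfac)
            (Finset.prod_nonneg fun _ _ => ?_) (by positivity) <;> positivity
      _ = _ := by
          rw [Finset.prod_const, Finset.card_range, pow_succ, rpow_neg_half_pow (by positivity),
            ← mul_assoc, ← mul_pow, neg_div]
          congr 2
          field_simp
  dom := by
    obtain ⟨C, hC⟩ := dom_bound g e p hp he
    refine ⟨fun x => C * ∑ m ∈ Finset.range (2 * g + 1),
      |x - e m| ^ (-1 / 2 : ℝ) * (1 + |x - e m|)⁻¹, ?_, ?_⟩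
    · refine Integrable.const_mul (integrable_finsetSum _ fun m _ => ?_) _
      exact integrable_ker.comp_sub_right (e m)
    · filter_upwards [ae_not_root (2 * g + 1) e] with x hx δ h0 h1
      refine le_trans ?_ (hC x)
      rw [norm_hyp]
      have hz : ‖(x : ℂ) + δ * Complex.I‖ ≤ |x| + 1 := by
        refine (norm_add_le _ _).trans ?_
        simp [abs_of_nonneg h0, h1]
      refine mul_le_mul (pow_le_pow_left₀ (norm_nonneg _) hz p)
        (Finset.prod_le_prod (fun _ _ => by positivity) fun m hm => ?_)
        (Finset.prod_nonneg fun _ _ => by positivity) (by positivity)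
      · refine Real.rpow_le_rpow_of_nonpos (abs_pos.2 (sub_ne_zero.2 (hx m hm))) ?_ (by norm_num)
        refine le_trans ?_ (Complex.abs_re_le_norm _)
        simp
  lim := by
    filter_upwards [ae_not_root (2 * g + 1) e] with x hx
    unfold hyp
    refine Filter.Tendsto.mul ?_ (tendsto_finsetProd _ fun m hm => ?_)
    · have : Continuous fun δ : ℝ => ((x : ℂ) + δ * Complex.I) ^ p := by fun_prop
      have := this.tendsto 0
      simp only [Complex.ofReal_zero, zero_mul, add_zero] at this
      exact this.mono_left nhdsWithin_le_nhds
    · have := tendsto_cpow_boundary (((-1 / 2 : ℝ)) : ℂ) (sub_ne_zero.2 (hx m hm))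
      push_cast at this ⊢
      refine this.congr fun δ => ?_
      congr 1
      ring

theorem cpow_neg_half_of_nonneg {y : ℝ} (hy : 0 ≤ y) :
    (y : ℂ) ^ (((-1 / 2 : ℝ)) : ℂ) = ((|y| ^ (-1 / 2 : ℝ) : ℝ) : ℂ) := by
  rw [abs_of_nonneg hy, Complex.ofReal_cpow hy]

theorem cpow_neg_half_of_nonpos {y : ℝ} (hy : y ≤ 0) :
    (y : ℂ) ^ (((-1 / 2 : ℝ)) : ℂ) = ((|y| ^ (-1 / 2 : ℝ) : ℝ) : ℂ) * -Complex.I := by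
  rw [abs_of_nonpos hy, Complex.ofReal_cpow_of_nonpos hy, Complex.ofReal_cpow (by linarith),
    ← Complex.exp_neg_pi_div_two_mul_I]
  push_cast
  congr 2
  ring

/-- Boundary value at a real `x` with `r` roots to its left: each of the other `n - r` roots
contributes a factor `-i`. -/
theorem hyp_real {n r : ℕ} (e : ℕ → ℝ) (p : ℕ) {x : ℝ}
    (h1 : ∀ m < r, e m ≤ x) (h2 : ∀ m, r ≤ m → m < n → x ≤ e m) :
    hyp n e p x = (wt n e p x : ℂ) * (-Complex.I) ^ (n - r) := by
  have hw : wt n e p x = x ^ p * ∏ m ∈ Finset.range n, |x - e m| ^ (-1 / 2 : ℝ) := by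
    rw [wt, Real.finsetProd_rpow _ _ (fun _ _ => abs_nonneg _), ← Finset.abs_prod, neg_div,
      Real.rpow_neg (abs_nonneg _), Real.sqrt_eq_rpow, div_eq_mul_inv]
  have hs : ∀ k, ∏ m ∈ Finset.range k, (-Complex.I) ^ (if m < r then 0 else 1) =
      (-Complex.I) ^ (k - r) := by
    intro k
    induction k with
    | zero => simp
    | succ k ih =>
      rw [Finset.prod_range_succ, ih, ← pow_add]
      congr 1
      split_ifs <;> omega
  rw [hw, ← hs n, hyp]
  push_cast
  rw [mul_assoc, ← Finset.prod_mul_distrib]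
  congr 1
  refine Finset.prod_congr rfl fun m hm => ?_
  rw [Finset.mem_range] at hm
  split_ifs with h
  · have := cpow_neg_half_of_nonneg (y := x - e m) (by linarith [h1 m h])
    push_cast at this
    rw [this]; simp
  · have := cpow_neg_half_of_nonpos (y := x - e m) (by linarith [h2 m (by omega) hm])
    push_cast at this
    rw [this]; simp

/-! ### Reduction to integrals over bands and gaps -/

section Real
variable {g : ℕ} {e : ℕ → ℝ}

theorem root_le (he : StrictMonoOn e (Set.Iic (2 * g))) {m k : ℕ} (hmk : m ≤ k) (hk : k ≤ 2 * g) :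
    e m ≤ e k :=
  he.monotoneOn (Set.mem_Iic.2 (hmk.trans hk)) (Set.mem_Iic.2 hk) hmk

theorem hyp_Icc (he : StrictMonoOn e (Set.Iic (2 * g))) (p : ℕ) {m : ℕ} (hm : m < 2 * g) {x : ℝ}
    (hx : x ∈ Set.Icc (e m) (e (m + 1))) :
    hyp (2 * g + 1) e p x = (wt (2 * g + 1) e p x : ℂ) * (-Complex.I) ^ (2 * g - m) := by
  have := hyp_real (n := 2 * g + 1) (r := m + 1) e p (x := x)
    (fun k hk => (root_le he (by omega) (by omega)).trans hx.1)
    (fun k hk hk' => hx.2.trans (root_le he hk (by omega)))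
  rw [this]
  congr 2
  omega

theorem negI_pow_even (s : ℕ) : (-Complex.I) ^ (2 * s) = (((-1) ^ s : ℝ) : ℂ) := by
  rw [pow_mul]; simp

theorem negI_pow_odd (s : ℕ) :
    (-Complex.I) ^ (2 * s + 1) = (((-1) ^ (s + 1) : ℝ) : ℂ) * Complex.I := by
  rw [pow_succ, negI_pow_even]; push_cast; ring

theorem hyp_band (he : StrictMonoOn e (Set.Iic (2 * g))) (p : ℕ) {l : ℕ} (hl : l < g) {x : ℝ}
    (hx : x ∈ Set.Icc (e (2 * l)) (e (2 * l + 1))) :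
    (hyp (2 * g + 1) e p x).re = (-1) ^ (g - l) * wt (2 * g + 1) e p x ∧
      (hyp (2 * g + 1) e p x).im = 0 := by
  rw [hyp_Icc he p (by omega) hx, show 2 * g - 2 * l = 2 * (g - l) by omega, negI_pow_even,
    ← Complex.ofReal_mul]
  exact ⟨by rw [Complex.ofReal_re, mul_comm], Complex.ofReal_im _⟩

theorem hyp_gap (he : StrictMonoOn e (Set.Iic (2 * g))) (p : ℕ) {k : ℕ} (hk : k < g) {x : ℝ}
    (hx : x ∈ Set.Icc (e (2 * k + 1)) (e (2 * k + 2))) :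
    (hyp (2 * g + 1) e p x).re = 0 ∧
      (hyp (2 * g + 1) e p x).im = (-1) ^ (g - k) * wt (2 * g + 1) e p x := by
  rw [hyp_Icc he p (by omega) hx, show 2 * g - (2 * k + 1) = 2 * (g - k - 1) + 1 by omega,
    negI_pow_odd, show g - k - 1 + 1 = g - k by omega, ← mul_assoc, ← Complex.ofReal_mul,
    Complex.re_ofReal_mul, Complex.im_ofReal_mul, Complex.I_re, Complex.I_im]
  exact ⟨mul_zero _, by ring⟩

theorem hyp_left (he : StrictMonoOn e (Set.Iic (2 * g))) (p : ℕ) {x : ℝ} (hx : x ≤ e 0) :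
    (hyp (2 * g + 1) e p x).re = 0 := by
  have := hyp_real (n := 2 * g + 1) (r := 0) e p (x := x) (by simp)
    (fun k _ hk' => hx.trans (root_le he (by omega) (by omega)))
  rw [this, Nat.sub_zero, negI_pow_odd, ← mul_assoc, ← Complex.ofReal_mul,
    Complex.re_ofReal_mul, Complex.I_re, mul_zero]

theorem hyp_right (he : StrictMonoOn e (Set.Iic (2 * g))) (p : ℕ) {x : ℝ} (hx : e (2 * g) ≤ x) :
    (hyp (2 * g + 1) e p x).im = 0 := by
  have := hyp_real (n := 2 * g + 1) (r := 2 * g + 1) e p (x := x)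
    (fun k hk => (root_le he (by omega) le_rfl).trans hx) (fun k _ _ => by omega)
  rw [this]
  simp

/-- The integral of `x ^ p / √|f|` between the consecutive roots `e m` and `e (m + 1)`. -/
noncomputable def per (g : ℕ) (e : ℕ → ℝ) (p m : ℕ) : ℝ :=
  ∫ x in (e m)..(e (m + 1)), wt (2 * g + 1) e p x

theorem injOn_root (he : StrictMonoOn e (Set.Iic (2 * g))) :
    Set.InjOn e (Finset.range (2 * g + 1)) :=
  he.injOn.mono fun m hm => by
    simp only [Finset.coe_range, Set.mem_Iio] at hm
    exact Set.mem_Iic.2 (by omega)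

theorem primitive_left (he : StrictMonoOn e (Set.Iic (2 * g))) (p : ℕ) {x : ℝ} (hx : x ≤ e 0) :
    ∫ y : ℝ in Set.Iic x, (hyp (2 * g + 1) e p y).re = 0 := by
  rw [setIntegral_congr_fun (g := fun _ => (0 : ℝ)) measurableSet_Iic
    (fun y hy => hyp_left he p (le_trans hy hx))]
  simp

theorem primitive_step (he : StrictMonoOn e (Set.Iic (2 * g))) {p : ℕ} (hp : p < g) (a b : ℝ) :
    ∫ y : ℝ in Set.Iic b, (hyp (2 * g + 1) e p y).re =
      (∫ y : ℝ in Set.Iic a, (hyp (2 * g + 1) e p y).re) +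
        ∫ y : ℝ in a..b, (hyp (2 * g + 1) e p y).re := by
  have hi : Integrable fun y : ℝ => (hyp (2 * g + 1) e p y).re :=
    (hyp_hardy g e p hp (injOn_root he)).integrable.re
  rw [← intervalIntegral.integral_Iic_sub_Iic hi.integrableOn hi.integrableOn]
  ring

/-- On the `k`-th gap the primitive of `Re F` is constant: the signed sum of the bands to the
left. -/
theorem primitive_on_gap (he : StrictMonoOn e (Set.Iic (2 * g))) {p : ℕ} (hp : p < g) {k : ℕ}
    (hk : k < g) {x : ℝ} (hx : x ∈ Set.Icc (e (2 * k + 1)) (e (2 * k + 2))) :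
    ∫ y : ℝ in Set.Iic x, (hyp (2 * g + 1) e p y).re =
      ∑ l ∈ Finset.range (k + 1), (-1) ^ (g - l) * per g e p (2 * l) := by
  have hgap : ∀ k < g, ∀ x ∈ Set.Icc (e (2 * k + 1)) (e (2 * k + 2)),
      ∫ y : ℝ in (e (2 * k + 1))..x, (hyp (2 * g + 1) e p y).re = 0 := by
    intro k hk x hx
    rw [intervalIntegral.integral_congr (g := fun _ => (0 : ℝ))]
    · simp
    · intro y hy
      rw [Set.uIcc_of_le hx.1] at hy
      exact (hyp_gap he p hk ⟨hy.1, hy.2.trans hx.2⟩).1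
  have hband : ∀ k < g, ∫ y : ℝ in (e (2 * k))..(e (2 * k + 1)), (hyp (2 * g + 1) e p y).re =
      (-1) ^ (g - k) * per g e p (2 * k) := by
    intro k hk
    rw [per, ← intervalIntegral.integral_const_mul]
    apply intervalIntegral.integral_congr
    intro y hy
    rw [Set.uIcc_of_le (root_le he (by omega) (by omega))] at hy
    exact (hyp_band he p hk hy).1
  induction k generalizing x with
  | zero =>
    rw [primitive_step he hp (e (2 * 0 + 1)), hgap 0 hk x hx, primitive_step he hp (e (2 * 0)),
      hband 0 hk, primitive_left he p le_rfl]
    simp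
  | succ k ih =>
    rw [primitive_step he hp (e (2 * (k + 1) + 1)), hgap (k + 1) hk x hx,
      primitive_step he hp (e (2 * (k + 1))), hband (k + 1) hk,
      ih (x := e (2 * (k + 1))) (by omega)
        ⟨root_le he (by omega) (by omega), le_rfl⟩, Finset.sum_range_succ _ (k + 1)]
    simp

theorem im_mul_primitive (he : StrictMonoOn e (Set.Iic (2 * g))) {p q : ℕ} (hp : p < g)
    (hq : q < g) :
    ∫ x : ℝ, (hyp (2 * g + 1) e q x).im * ∫ y : ℝ in Set.Iic x, (hyp (2 * g + 1) e p y).re =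
      ∑ k ∈ Finset.range g, ((-1) ^ (g - k) * per g e q (2 * k + 1)) *
        ∑ l ∈ Finset.range (k + 1), (-1) ^ (g - l) * per g e p (2 * l) := by
  have hi := integrable_mul_Iic (hyp_hardy g e p hp (injOn_root he)).integrable.re
    (hyp_hardy g e q hq (injOn_root he)).integrable.im
  change Integrable (fun x : ℝ => (hyp (2 * g + 1) e q x).im *
    ∫ y : ℝ in Set.Iic x, (hyp (2 * g + 1) e p y).re) at hi
  set Ψ : ℝ → ℝ := fun x : ℝ => (hyp (2 * g + 1) e q x).im *
    ∫ y : ℝ in Set.Iic x, (hyp (2 * g + 1) e p y).re with hΨ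
  have hleft : ∫ x in Set.Iic (e 0), Ψ x = 0 := by
    rw [setIntegral_congr_fun (g := fun _ => (0 : ℝ)) measurableSet_Iic]
    · simp
    · intro x hx
      simp only [hΨ, primitive_left he p hx, mul_zero]
  have hright : ∫ x in Set.Ioi (e (2 * g)), Ψ x = 0 := by
    rw [setIntegral_congr_fun (g := fun _ => (0 : ℝ)) measurableSet_Ioi]
    · simp
    · intro x hx
      simp only [hΨ, hyp_right he q (le_of_lt hx), zero_mul]
  have hmid : ∀ k ≤ g, ∫ x in (e 0)..(e (2 * k)), Ψ x =
      ∑ k ∈ Finset.range k, ((-1) ^ (g - k) * per g e q (2 * k + 1)) *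
        ∑ l ∈ Finset.range (k + 1), (-1) ^ (g - l) * per g e p (2 * l) := by
    intro k
    induction k with
    | zero => simp
    | succ k ih =>
      intro hk
      have h1 : ∫ x in (e (2 * k))..(e (2 * k + 1)), Ψ x = 0 := by
        rw [intervalIntegral.integral_congr (g := fun _ => (0 : ℝ))]
        · simp
        · intro y hy
          rw [Set.uIcc_of_le (root_le he (by omega) (by omega))] at hy
          simp only [hΨ, (hyp_band he q (by omega) hy).2, zero_mul]
      have h2 : ∫ x in (e (2 * k + 1))..(e (2 * k + 2)), Ψ x =
          ((-1) ^ (g - k) * per g e q (2 * k + 1)) *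
          ∑ l ∈ Finset.range (k + 1), (-1) ^ (g - l) * per g e p (2 * l) := by
        rw [per, ← intervalIntegral.integral_const_mul, ← intervalIntegral.integral_mul_const]
        apply intervalIntegral.integral_congr
        intro y hy
        rw [Set.uIcc_of_le (root_le he (by omega) (by omega))] at hy
        simp only [hΨ, (hyp_gap he q (by omega) hy).2, primitive_on_gap he hp (by omega) hy]
      rw [Finset.sum_range_succ, ← ih (by omega), ← h2,
        ← intervalIntegral.integral_add_adjacent_intervals (b := e (2 * k + 1))
          hi.intervalIntegrable hi.intervalIntegrable,
        ← intervalIntegral.integral_add_adjacent_intervals (b := e (2 * k))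
          hi.intervalIntegrable hi.intervalIntegrable, h1, add_zero, mul_add, mul_one]
  rw [← hmid g le_rfl, ← intervalIntegral.integral_Iic_add_Ioi (b := e 0)
    hi.integrableOn hi.integrableOn, hleft, zero_add,
    ← intervalIntegral.integral_interval_add_Ioi hi.integrableOn hi.integrableOn, hright, add_zero]

/-- The bilinear relation between the integrals over gaps (`per` at odd indices) and over bands
(`per` at even indices). -/
theorem bilinear (he : StrictMonoOn e (Set.Iic (2 * g))) {p q : ℕ} (hp : p < g) (hq : q < g) :
    ∑ k ∈ Finset.range g, ∑ l ∈ Finset.range (k + 1),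
        (-1) ^ (k - l) * (per g e q (2 * k + 1) * per g e p (2 * l)) =
      ∑ k ∈ Finset.range g, ∑ l ∈ Finset.range (k + 1),
        (-1) ^ (k - l) * (per g e p (2 * k + 1) * per g e q (2 * l)) := by
  have h := (hyp_hardy g e p hp (injOn_root he)).re_im_symm (hyp_hardy g e q hq (injOn_root he))
  rw [im_mul_primitive he hp hq, im_mul_primitive he hq hp] at h
  have hs : ∀ p q : ℕ, ∑ k ∈ Finset.range g, ((-1) ^ (g - k) * per g e q (2 * k + 1)) *
        ∑ l ∈ Finset.range (k + 1), (-1) ^ (g - l) * per g e p (2 * l) =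
      ∑ k ∈ Finset.range g, ∑ l ∈ Finset.range (k + 1),
        (-1) ^ (k - l) * (per g e q (2 * k + 1) * per g e p (2 * l)) := by
    intro p q
    refine Finset.sum_congr rfl fun k hk => ?_
    rw [Finset.mul_sum]
    refine Finset.sum_congr rfl fun l hl => ?_
    rw [Finset.mem_range] at hk hl
    have : (-1 : ℝ) ^ (g - k) * (-1) ^ (g - l) = (-1) ^ (k - l) := by
      rw [show g - l = (g - k) + (k - l) by omega, pow_add, ← mul_assoc, ← mul_pow]
      simp
    rw [← this]
    ring
  rwa [hs, hs] at h

end Real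

/-! ### The curve `w² = f(z)` and its matrix `Π₀` -/

/-- The roots of `f` in increasing order: `-a (g-1) < ⋯ < -a 0 < 0 < a 0 < ⋯ < a (g-1)`, indexed
by `0, …, 2g`. -/
noncomputable def rootSeq (g : ℕ) (a : ℕ → ℝ) (m : ℕ) : ℝ :=
  if m < g then -a (g - 1 - m) else if m = g then 0 else a (m - g - 1)

section Roots
variable {g : ℕ} {a : ℕ → ℝ}

theorem a_pos (ha0 : a 0 = 1) (hmono : StrictMonoOn a (Set.Iio g)) {i : ℕ} (hi : i < g) :
    0 < a i := by
  have := hmono.monotoneOn (Set.mem_Iio.2 (by omega : 0 < g)) (Set.mem_Iio.2 hi) (Nat.zero_le i)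
  linarith

theorem rootSeq_strictMonoOn (ha0 : a 0 = 1) (hmono : StrictMonoOn a (Set.Iio g)) :
    StrictMonoOn (rootSeq g a) (Set.Iic (2 * g)) := by
  intro m hm k hk hmk
  rw [Set.mem_Iic] at hm hk
  have hlt : ∀ i j, i < j → j < g → a i < a j := fun i j hij hj =>
    hmono (Set.mem_Iio.2 (hij.trans hj)) (Set.mem_Iio.2 hj) hij
  have hpos : ∀ i, i < g → 0 < a i := fun i hi => a_pos ha0 hmono hi
  unfold rootSeq
  split_ifs with h1 h2 h3 h4 h5 <;> try omega
  · exact neg_lt_neg (hlt _ _ (by omega) (by omega))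
  · linarith [hpos (g - 1 - m) (by omega)]
  · linarith [hpos (g - 1 - m) (by omega), hpos (k - g - 1) (by omega)]
  · exact hpos _ (by omega)
  · exact hlt _ _ (by omega) (by omega)

theorem rootSeq_reflect {m : ℕ} (hm : m ≤ 2 * g) : rootSeq g a (2 * g - m) = -rootSeq g a m := by
  unfold rootSeq
  split_ifs <;> first | omega | simp
  all_goals congr 1; omega

theorem prod_rootSeq (x : ℝ) : ∏ m ∈ Finset.range (2 * g + 1), (x - rootSeq g a m) =
    x * ∏ i ∈ Finset.range g, (x ^ 2 - a i ^ 2) := by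
  rw [show 2 * g + 1 = g + 1 + g by omega, Finset.prod_range_add, Finset.prod_range_succ,
    ← Finset.prod_range_reflect (fun m => x - rootSeq g a m)]
  have h1 : ∏ j ∈ Finset.range g, (x - rootSeq g a (g - 1 - j)) =
      ∏ j ∈ Finset.range g, (x + a j) := by
    refine Finset.prod_congr rfl fun j hj => ?_
    rw [Finset.mem_range] at hj
    rw [rootSeq, if_pos (by omega), show g - 1 - (g - 1 - j) = j by omega, sub_neg_eq_add]
  have h2 : ∏ j ∈ Finset.range g, (x - rootSeq g a (g + 1 + j)) =
      ∏ j ∈ Finset.range g, (x - a j) := by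
    refine Finset.prod_congr rfl fun j _ => ?_
    rw [rootSeq, if_neg (by omega), if_neg (by omega), show g + 1 + j - g - 1 = j by omega]
  have h3 : rootSeq g a g = 0 := by simp [rootSeq]
  rw [h1, h2, h3, sub_zero, mul_comm _ x, mul_assoc, ← Finset.prod_mul_distrib]
  congr 1
  exact Finset.prod_congr rfl fun j _ => by ring

theorem wt_rootSeq (p : ℕ) (x : ℝ) : wt (2 * g + 1) (rootSeq g a) p x =
    x ^ p / Real.sqrt |x * ∏ i ∈ Finset.range g, (x ^ 2 - a i ^ 2)| := by
  rw [wt, prod_rootSeq]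

/-- The substitution `x ↦ -x` exchanges bands and gaps. -/
theorem per_reflect (p : ℕ) {m : ℕ} (hm : m < 2 * g) :
    per g (rootSeq g a) p m = (-1) ^ p * per g (rootSeq g a) p (2 * g - 1 - m) := by
  have h1 : rootSeq g a (2 * g - 1 - m) = -rootSeq g a (m + 1) := by
    rw [← rootSeq_reflect (by omega)]
    congr 1
    omega
  have h2 : rootSeq g a (2 * g - 1 - m + 1) = -rootSeq g a m := by
    rw [← rootSeq_reflect (by omega)]
    congr 1
    omega
  rw [per, per, h1, h2, ← intervalIntegral.integral_comp_neg,
    ← intervalIntegral.integral_const_mul]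
  apply intervalIntegral.integral_congr
  intro x _
  simp only [wt_rootSeq, neg_sq, neg_mul, abs_neg]
  rw [neg_pow x p, mul_div_assoc, ← mul_assoc, ← mul_pow]
  simp

/-- In both parities of `g`, the columns of `Π₀` are the integrals over the successive bands. -/
theorem PiZero_apply_s7 (ha0 : a 0 = 1) (j k : Fin g) :
    PiZero g a j k = per g (rootSeq g a) j (2 * k) := by
  have hk := k.2
  have hright : ∀ m : ℕ, g < m →
      per g (rootSeq g a) j m = ∫ z in (a (m - g - 1))..(a (m - g)),
        z ^ (j : ℕ) / Real.sqrt |z * ∏ i ∈ Finset.range g, (z ^ 2 - a i ^ 2)| := by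
    intro m hm
    have e1 : rootSeq g a m = a (m - g - 1) := by
      rw [rootSeq, if_neg (by omega), if_neg (by omega)]
    have e2 : rootSeq g a (m + 1) = a (m - g) := by
      rw [rootSeq, if_neg (by omega), if_neg (by omega)]
      congr 1
      omega
    rw [per, e1, e2]
    simp only [wt_rootSeq]
  have hzero : per g (rootSeq g a) j g = ∫ z in (0 : ℝ)..1,
        z ^ (j : ℕ) / Real.sqrt |z * ∏ i ∈ Finset.range g, (z ^ 2 - a i ^ 2)| := by
    have e1 : rootSeq g a g = 0 := by simp [rootSeq]
    have e2 : rootSeq g a (g + 1) = 1 := by simp [rootSeq, ha0]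
    rw [per, e1, e2]
    simp only [wt_rootSeq]
  simp only [PiZero, Matrix.of_apply, Nat.add_sub_cancel]
  split_ifs with h1 h2 h3 h4 h5 h6 h7
  · rw [per_reflect _ (by omega), hright _ (by omega)]
    rw [show 2 * g - 1 - 2 * (k : ℕ) - g - 1 = g - 2 * ((k : ℕ) + 1) by omega,
      show 2 * g - 1 - 2 * (k : ℕ) - g = g - 2 * ((k : ℕ) + 1) + 1 by omega]
  · rw [per_reflect _ (by omega), hright _ (by omega),
      show 2 * g - 1 - 2 * (k : ℕ) - g - 1 = 0 by omega,
      show 2 * g - 1 - 2 * (k : ℕ) - g = 1 by omega, ha0]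
  · rw [show 2 * (k : ℕ) = g by omega, hzero]
  · rw [hright _ (by omega)]
    congr 2 <;> omega
  · rw [per_reflect _ (by omega), hright _ (by omega)]
    rw [show 2 * g - 1 - 2 * (k : ℕ) - g - 1 = g - 2 * ((k : ℕ) + 1) by omega,
      show 2 * g - 1 - 2 * (k : ℕ) - g = g - 2 * ((k : ℕ) + 1) + 1 by omega]
  · rw [per_reflect _ (by omega), show 2 * g - 1 - 2 * (k : ℕ) = g by omega, hzero]
  · rw [hright _ (by omega), show 2 * (k : ℕ) - g - 1 = 0 by omega,
      show 2 * (k : ℕ) - g = 1 by omega, ha0]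
  · rw [hright _ (by omega)]
    congr 2 <;> omega

end Roots

/-- For `g ≥ 2` and `1 = a 0 < a 1 < ⋯ < a (g-1)`, with `M = diag((-1)^{j-1})` and
`N j k = (-1)^{g+1-j-k}` for `j + k ≤ g + 1` (1-based) and `0` otherwise, the real
matrix `Π₀⁻¹ M Π₀ N` (the imaginary part of the period matrix) is symmetric. -/
theorem stmt_7 (g : ℕ) (hg : 2 ≤ g) (a : ℕ → ℝ) (ha0 : a 0 = 1)
    (hmono : StrictMonoOn a (Set.Iio g))
    (M N : Matrix (Fin g) (Fin g) ℝ)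
    (hM : M = Matrix.diagonal fun j : Fin g => (-1 : ℝ) ^ (j : ℕ))
    (hN : N = Matrix.of fun j k : Fin g =>
      if (j : ℕ) + 1 + ((k : ℕ) + 1) ≤ g + 1 then
        (-1 : ℝ) ^ (g + 1 - ((j : ℕ) + 1) - ((k : ℕ) + 1))
      else 0) :
    ((PiZero g a)⁻¹ * M * PiZero g a * N).IsSymm := by
  set A := PiZero g a with hA
  have hentry : ∀ p q : Fin g, (M * A * N * Aᵀ) p q =
      ∑ k ∈ Finset.range g, ∑ l ∈ Finset.range (k + 1), (-1) ^ (k - l) *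
        (per g (rootSeq g a) p (2 * k + 1) * per g (rootSeq g a) q (2 * l)) := by
    intro p q
    have e1 : (M * A * N * Aᵀ) p q = ∑ k : Fin g, ∑ l : Fin g,
        ((-1) ^ (p : ℕ) * A p k) * N k l * A q l := by
      rw [Matrix.mul_assoc, hM, Matrix.mul_apply]
      refine Finset.sum_congr rfl fun k _ => ?_
      rw [Matrix.diagonal_mul, Matrix.mul_apply, Finset.mul_sum]
      simp only [Matrix.transpose_apply, mul_assoc]
    rw [e1]
    simp only [hA, hN, PiZero_apply_s7 ha0, Matrix.of_apply]
    rw [Fin.sum_univ_eq_sum_range (fun k => ∑ l : Fin g,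
      ((-1) ^ (p : ℕ) * per g (rootSeq g a) p (2 * k)) *
        (if k + 1 + ((l : ℕ) + 1) ≤ g + 1 then (-1 : ℝ) ^ (g + 1 - (k + 1) - ((l : ℕ) + 1)) else 0) *
        per g (rootSeq g a) q (2 * l)) g, ← Finset.sum_range_reflect]
    refine Finset.sum_congr rfl fun k hk => ?_
    rw [Finset.mem_range] at hk
    rw [Fin.sum_univ_eq_sum_range (fun l =>
      ((-1) ^ (p : ℕ) * per g (rootSeq g a) p (2 * (g - 1 - k))) *
        (if g - 1 - k + 1 + (l + 1) ≤ g + 1 then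
          (-1 : ℝ) ^ (g + 1 - (g - 1 - k + 1) - (l + 1)) else 0) *
        per g (rootSeq g a) q (2 * l)) g]
    symm
    have hsub : Finset.range (k + 1) ⊆ Finset.range g := Finset.range_subset_range.2 (by omega)
    rw [← Finset.sum_subset hsub]
    · refine Finset.sum_congr rfl fun l hl => ?_
      rw [Finset.mem_range] at hl
      rw [if_pos (by omega), show g + 1 - (g - 1 - k + 1) - (l + 1) = k - l by omega,
        per_reflect (g := g) p (m := 2 * k + 1) (by omega),
        show 2 * g - 1 - (2 * k + 1) = 2 * (g - 1 - k) by omega]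
      ring
    · intro l _ hl
      rw [Finset.mem_range] at hl
      rw [if_neg (by omega)]
      ring
  have hsymm : (M * A * N * Aᵀ)ᵀ = M * A * N * Aᵀ := by
    ext p q
    rw [Matrix.transpose_apply, hentry, hentry]
    exact bilinear (rootSeq_strictMonoOn ha0 hmono) p.2 q.2
  by_cases hdet : IsUnit A.det
  · have hdetT : IsUnit Aᵀ.det := by rwa [Matrix.det_transpose]
    have e2 : A⁻¹ * M * A * N = A⁻¹ * (M * A * N * Aᵀ) * (A⁻¹)ᵀ := by
      rw [Matrix.transpose_nonsing_inv, ← Matrix.mul_assoc,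
        Matrix.mul_nonsing_inv_cancel_right _ _ hdetT]
      simp only [Matrix.mul_assoc]
    rw [Matrix.IsSymm, e2, Matrix.transpose_mul, Matrix.transpose_mul, hsymm,
      Matrix.transpose_transpose]
    simp only [Matrix.mul_assoc]
  -- for singular `A` the junk value `A⁻¹ = 0` makes the whole product vanish
  · rw [Matrix.nonsing_inv_apply_not_isUnit _ hdet]
    simp [Matrix.IsSymm]
end
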